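/- (Local mass near the blow-up point at the blow-up scale.) Under the blow-up setup, for every ε > 0 there exists k_ε > 0 and i_ε ∈ ℕ such that for all i ≥ i_ε, 8π(1 − ε) ≤ ∫_{B(x_i, k_ε e^{−u_i(x_i)/2})} V_i(y) e^{u_i(y)} dy ≤ 8π(1 + ε). -/

import Mathlib

open MeasureTheory Filter Metric

abbrev E2 := EuclideanSpace ℝ (Fin 2)

noncomputable def pd (j : Fin 2) (u : E2 → ℝ) (x : E2) : ℝ :=
  fderiv ℝ u x (EuclideanSpace.single j 1)

noncomputable def lapl (u : E2 → ℝ) (x : E2) : ℝ :=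
  pd 0 (pd 0 u) x + pd 1 (pd 1 u) x

/-! The upper bound is monotonicity of the mass in the radius. For the lower bound, rescale `u i`
around `x_ i` by `r = exp (-u i (x_ i) / 2)`: this gives functions `v ≤ v 0 = 0` on large discs with
`-Δv = W e^v`, bounded `∫ e^v`, and `W` nearly constant because `V i` is Hölder. Let `M` be the
mass of `-Δv` on a large disc and `P = ∫ χ (-Δv) (x · ∇v)` with a radial cutoff `χ`.

* Integrating by parts as if `W` were constant (Pohozaev) gives `-P ≥ 2 M`, up to a small error and
  a multiple of the mass gained between two radii.
* Expressing `∇v` through the sources `-Δv` and symmetrising in the two points gives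
  `-P ≤ M ^ 2 / (4 π)`, up to a far-field error that is small on large discs.

Hence `M (2 - M / (4 π))` is small unless the mass jumps by a fixed amount. As the total mass is
bounded it can jump only finitely often, and `M ≥ π` by Jensen's inequality for disc means, so
`M ≥ 8 π (1 - ε)` on some disc whose radius depends only on the bounds; no compactness or
classification of entire solutions is needed. -/

open scoped Topology RealInnerProductSpace

theorem hasDerivAt_max_zero_pow (n : ℕ) (s : ℝ) :
    HasDerivAt (fun s : ℝ => max 0 s ^ (n + 2)) ((n + 2) * max 0 s ^ (n + 1)) s := by
  rcases lt_trichotomy s 0 with hs | rfl | hs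
  · have hzero : (fun s : ℝ => max 0 s ^ (n + 2)) =ᶠ[𝓝 s] fun _ => 0 := by
      filter_upwards [Iio_mem_nhds hs] with t ht
      simp [max_eq_left (Set.mem_Iio.1 ht).le]
    refine ((hasDerivAt_const s (0 : ℝ)).congr_of_eventuallyEq hzero).congr_deriv ?_
    simp [max_eq_left hs.le]
  · have hO : (fun s : ℝ => max 0 s ^ (n + 2)) =O[𝓝 0] fun s : ℝ => s ^ (n + 2) := by
      refine Asymptotics.IsBigO.of_bound 1 (Eventually.of_forall fun s => ?_)
      rw [norm_pow, norm_pow, one_mul, Real.norm_of_nonneg (le_max_left _ _)]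
      gcongr
      exact max_le (norm_nonneg _) (le_abs_self _)
    have ho := hO.trans_isLittleO (Asymptotics.isLittleO_pow_id (𝕜 := ℝ) (n := n + 2) (by omega))
    simpa [hasDerivAt_iff_isLittleO] using ho
  · have hpow : (fun s : ℝ => max 0 s ^ (n + 2)) =ᶠ[𝓝 s] fun s => s ^ (n + 2) := by
      filter_upwards [Ioi_mem_nhds hs] with t ht
      rw [max_eq_right (Set.mem_Ioi.1 ht).le]
    refine ((hasDerivAt_pow (n + 2) s).congr_of_eventuallyEq hpow).congr_deriv ?_
    simp [max_eq_right hs.le]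

theorem contDiff_max_zero_pow (n : ℕ) : ContDiff ℝ 1 fun s : ℝ => max 0 s ^ (n + 2) := by
  have hderiv : deriv (fun s : ℝ => max 0 s ^ (n + 2)) =
      fun s : ℝ => (n + 2) * max 0 s ^ (n + 1) :=
    funext fun s => (hasDerivAt_max_zero_pow n s).deriv
  refine contDiff_one_iff_deriv.2
    ⟨fun s => (hasDerivAt_max_zero_pow n s).differentiableAt, ?_⟩
  rw [hderiv]
  fun_prop

theorem setIntegral_Ioi_mul_max_zero_one_sub_sq :
    ∫ y in Set.Ioi (0 : ℝ), y * max 0 (1 - y ^ 2) ^ 2 = 1 / 6 := by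
  have hsupp : ∫ y in Set.Ioi (0 : ℝ), y * max 0 (1 - y ^ 2) ^ 2 =
      ∫ y in Set.Ioc (0 : ℝ) 1, y * (1 - y ^ 2) ^ 2 := by
    rw [setIntegral_eq_of_subset_of_forall_sdiff_eq_zero measurableSet_Ioi
      (Set.Ioc_subset_Ioi_self : Set.Ioc (0 : ℝ) 1 ⊆ _)]
    · refine setIntegral_congr_fun measurableSet_Ioc fun y ⟨hy0, hy1⟩ => ?_
      simp only [max_eq_right (show 0 ≤ 1 - y ^ 2 by nlinarith)]
    · intro y ⟨hy0, hy1⟩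
      have hy : 1 < y := lt_of_not_ge fun h => hy1 ⟨hy0, h⟩
      rw [max_eq_left (by nlinarith)]
      simp
  have hprim : ∀ y ∈ Set.uIcc (0 : ℝ) 1,
      HasDerivAt (fun y : ℝ => -(1 - y ^ 2) ^ 3 / 6) (y * (1 - y ^ 2) ^ 2) y := fun y _ => by
    have hsq : HasDerivAt (fun y : ℝ => 1 - y ^ 2) (-(2 * y)) y := by
      simpa using (hasDerivAt_pow 2 y).const_sub 1
    refine ((hsq.pow 3).neg.div_const 6).congr_deriv ?_
    push_cast
    ring
  rw [hsupp, ← intervalIntegral.integral_of_le zero_le_one,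
    intervalIntegral.integral_eq_sub_of_hasDerivAt hprim
      (Continuous.intervalIntegrable (by fun_prop) _ _)]
  norm_num

section Cap

variable {E : Type*} [NormedAddCommGroup E]

/-- The truncated paraboloid of radius `R`. Its powers `cap R ^ (n + 2)` are the radial `C¹`
cutoffs of the whole argument: their gradients are again multiples of powers of `cap R`. -/
noncomputable def cap (R : ℝ) (x : E) : ℝ := max 0 (1 - ‖x‖ ^ 2 / R ^ 2)

theorem continuous_cap (R : ℝ) : Continuous (cap R : E → ℝ) := by
  unfold cap
  fun_prop

theorem cap_nonneg (R : ℝ) (x : E) : 0 ≤ cap R x := le_max_left _ _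

theorem cap_le_one (R : ℝ) (x : E) : cap R x ≤ 1 :=
  max_le zero_le_one (sub_le_self _ (by positivity))

theorem one_sub_div_le_cap {x : E} {ρ : ℝ} (hx : ‖x‖ ≤ ρ) (R : ℝ) :
    1 - ρ ^ 2 / R ^ 2 ≤ cap R x :=
  le_trans (by gcongr) (le_max_right _ _)

theorem cap_eq_zero {R : ℝ} (hR : 0 < R) {x : E} (hx : R ≤ ‖x‖) : cap R x = 0 := by
  refine max_eq_left ?_
  rw [sub_nonpos, one_le_div (by positivity)]
  gcongr

theorem cap_smul [NormedSpace ℝ E] {R : ℝ} (hR : 0 < R) (x : E) : cap R (R • x) = cap 1 x := by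
  simp only [cap, norm_smul, Real.norm_of_nonneg hR.le]
  field_simp

theorem cap_mul_norm_sq_div (R : ℝ) (x : E) :
    cap R x * (‖x‖ ^ 2 / R ^ 2) = cap R x - cap R x ^ 2 := by
  rcases le_total (1 - ‖x‖ ^ 2 / R ^ 2) 0 with h | h
  · simp [cap, max_eq_left h]
  · simp only [cap, max_eq_right h]
    ring

theorem hasCompactSupport_cap_pow [ProperSpace E] {R : ℝ} (hR : 0 < R) (n : ℕ) :
    HasCompactSupport fun x : E => cap R x ^ (n + 1) :=
  HasCompactSupport.intro (isCompact_closedBall 0 R) fun x hx => by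
    rw [mem_closedBall_zero_iff, not_le] at hx
    simp [cap_eq_zero hR hx.le]

section Gradient

variable [InnerProductSpace ℝ E]

theorem contDiff_cap_pow (R : ℝ) (n : ℕ) : ContDiff ℝ 1 fun x : E => cap R x ^ (n + 2) :=
  (contDiff_max_zero_pow n).comp (contDiff_const.sub ((contDiff_norm_sq ℝ).div_const _))

theorem hasFDerivAt_cap_pow (R : ℝ) (n : ℕ) (x : E) :
    HasFDerivAt (fun x : E => cap R x ^ (n + 2))
      ((-(2 * (n + 2) / R ^ 2) * cap R x ^ (n + 1)) • innerSL ℝ x) x := by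
  have hsq : HasFDerivAt (fun x : E => 1 - ‖x‖ ^ 2 / R ^ 2) (-((R ^ 2)⁻¹ • 2 • innerSL ℝ x)) x := by
    simpa only [div_eq_inv_mul, smul_eq_mul, Pi.smul_def] using
      (((hasStrictFDerivAt_norm_sq x).hasFDerivAt.const_smul (R ^ 2)⁻¹).const_sub (1 : ℝ))
  refine ((hasDerivAt_max_zero_pow n _).comp_hasFDerivAt x hsq).congr_fderiv ?_
  ext a
  simp only [cap, smul_apply, neg_apply, smul_eq_mul, nsmul_eq_mul, Nat.cast_ofNat]
  ring

theorem fderiv_cap_pow_apply (R : ℝ) (n : ℕ) (x a : E) :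
    fderiv ℝ (fun x : E => cap R x ^ (n + 2)) x a =
      -(2 * (n + 2) / R ^ 2) * cap R x ^ (n + 1) * ⟪x, a⟫ := by
  rw [(hasFDerivAt_cap_pow R n x).fderiv]
  simp

theorem fderiv_cap_pow_apply_self (R : ℝ) (n : ℕ) (x : E) :
    fderiv ℝ (fun x : E => cap R x ^ (n + 2)) x x =
      2 * (n + 2) * (cap R x ^ (n + 2) - cap R x ^ (n + 1)) := by
  rw [fderiv_cap_pow_apply, real_inner_self_eq_norm_sq]
  linear_combination -(2 * (n + 2)) * cap R x ^ n * cap_mul_norm_sq_div R x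

end Gradient

section Integral

variable [MeasurableSpace E] {μ : Measure E} {R : ℝ} {g : E → ℝ}

theorem setIntegral_ball_cap_pow_mul (hR : 0 < R) (n : ℕ) :
    ∫ x in ball 0 R, cap R x ^ (n + 1) * g x ∂μ = ∫ x, cap R x ^ (n + 1) * g x ∂μ :=
  setIntegral_eq_integral_of_forall_compl_eq_zero fun x hx => by
    rw [mem_ball_zero_iff, not_lt] at hx
    simp [cap_eq_zero hR hx]

variable [ProperSpace E] [BorelSpace E] [IsFiniteMeasureOnCompacts μ]

theorem integrableOn_ball_of_continuous (hg : Continuous g) (x : E) (R : ℝ) :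
    IntegrableOn g (ball x R) μ :=
  (hg.continuousOn.integrableOn_compact (isCompact_closedBall x R)).mono_set
    ball_subset_closedBall

theorem integrable_cap_pow_mul (hR : 0 < R) (n : ℕ) (hg : Continuous g) :
    Integrable (fun x => cap R x ^ (n + 1) * g x) μ :=
  (((continuous_cap R).pow _).mul hg).integrable_of_hasCompactSupport
    (hasCompactSupport_cap_pow hR n).mul_right

theorem integral_cap_pow_mul_le (hR : 0 < R) (n : ℕ) (hg : Continuous g)
    (hg0 : ∀ x ∈ ball (0 : E) R, 0 ≤ g x) :
    ∫ x, cap R x ^ (n + 1) * g x ∂μ ≤ ∫ x in ball 0 R, g x ∂μ := by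
  rw [← setIntegral_ball_cap_pow_mul hR]
  refine setIntegral_mono_on (integrable_cap_pow_mul hR n hg).integrableOn
    (integrableOn_ball_of_continuous hg 0 R) measurableSet_ball fun x hx => ?_
  exact mul_le_of_le_one_left (hg0 x hx) (pow_le_one₀ (cap_nonneg R x) (cap_le_one R x))

end Integral

theorem integral_cap_one_sq : ∫ x : E2, cap 1 x ^ 2 = Real.pi / 3 := by
  have hpolar := integral_fun_norm_addHaar (volume : Measure E2)
    (fun y : ℝ => max 0 (1 - y ^ 2) ^ 2)
  have hvol : volume.real (ball (0 : E2) 1) = Real.pi := by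
    simp [Measure.real, EuclideanSpace.volume_ball_fin_two, Real.pi_pos.le]
  simp only [finrank_euclideanSpace, Fintype.card_fin, hvol, Nat.add_one_sub_one, pow_one,
    smul_eq_mul, setIntegral_Ioi_mul_max_zero_one_sub_sq, nsmul_eq_mul] at hpolar
  simp only [cap, one_pow, div_one, hpolar]
  push_cast
  ring

end Cap

open scoped Gradient

theorem hasDerivAt_setIntegral_of_isCompact {X G : Type*} [TopologicalSpace X] [T2Space X]
    [MeasurableSpace X] [OpensMeasurableSpace X] {μ : Measure X} [IsFiniteMeasureOnCompacts μ]
    [NormedAddCommGroup G] [NormedSpace ℝ G] {K : Set X} (hK : IsCompact K) {F F' : ℝ → X → G}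
    (hF : ∀ t, Continuous (F t)) (hF' : Continuous fun p : ℝ × X => F' p.1 p.2)
    (hderiv : ∀ t x, HasDerivAt (fun t => F t x) (F' t x) t) (t : ℝ) :
    HasDerivAt (fun t => ∫ x in K, F t x ∂μ) (∫ x in K, F' t x ∂μ) t := by
  obtain ⟨B, hB⟩ := ((isCompact_closedBall t 1).prod hK).exists_bound_of_continuousOn
    hF'.continuousOn
  have hF't : Continuous (F' t) := hF'.comp (by fun_prop : Continuous fun x => (t, x))
  refine (hasDerivAt_integral_of_dominated_loc_of_deriv_le (bound := fun _ => B)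
    (closedBall_mem_nhds t one_pos)
    (Eventually.of_forall fun t => (hF t).continuousOn.aestronglyMeasurable_of_isCompact hK
      hK.measurableSet)
    ((hF t).continuousOn.integrableOn_compact hK)
    (hF't.continuousOn.aestronglyMeasurable_of_isCompact hK hK.measurableSet)
    ?_ (integrableOn_const hK.measure_lt_top.ne) (Eventually.of_forall fun x t _ => hderiv t x)).2
  filter_upwards [ae_restrict_mem hK.measurableSet] with x hx t' ht'
  exact hB (t', x) ⟨ht', hx⟩

section IntegrationByParts

theorem fderiv_apply_eq_sum {E ι : Type*} [NormedAddCommGroup E]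
    [InnerProductSpace ℝ E] [Fintype ι] (e : OrthonormalBasis ι ℝ E)
    (f : E → ℝ) (x y : E) : fderiv ℝ f x y = ∑ i, ⟪e i, y⟫ * fderiv ℝ f x (e i) := by
  conv_lhs => rw [← e.sum_repr' y]
  simp

variable {E : Type*} [NormedAddCommGroup E] [InnerProductSpace ℝ E] [FiniteDimensional ℝ E]
  [MeasurableSpace E] [BorelSpace E] {μ : Measure E} [μ.IsAddHaarMeasure] {φ h : E → ℝ}

theorem integral_mul_fderiv_apply_of_hasCompactSupport (hφ : ContDiff ℝ 1 φ)
    (hφc : HasCompactSupport φ) (hh : ContDiff ℝ 1 h) (a : E) :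
    ∫ x, φ x * fderiv ℝ h x a ∂μ = -∫ x, fderiv ℝ φ x a * h x ∂μ := by
  have hDφ : Continuous fun x => fderiv ℝ φ x a :=
    (hφ.continuous_fderiv one_ne_zero).clm_apply continuous_const
  have hDh : Continuous fun x => fderiv ℝ h x a :=
    (hh.continuous_fderiv one_ne_zero).clm_apply continuous_const
  exact integral_mul_fderiv_eq_neg_fderiv_mul_of_integrable
    ((hDφ.mul hh.continuous).integrable_of_hasCompactSupport (hφc.fderiv_apply ℝ a).mul_right)
    ((hφ.continuous.mul hDh).integrable_of_hasCompactSupport hφc.mul_right)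
    ((hφ.continuous.mul hh.continuous).integrable_of_hasCompactSupport hφc.mul_right)
    (fun x _ => hφ.differentiable one_ne_zero x) fun x _ => hh.differentiable one_ne_zero x

theorem integral_mul_inner_mul_fderiv_apply (hφ : ContDiff ℝ 1 φ) (hφc : HasCompactSupport φ)
    (hh : ContDiff ℝ 1 h) (a : E) :
    ∫ x, φ x * (⟪a, x⟫ * fderiv ℝ h x a) ∂μ =
      -∫ x, (‖a‖ ^ 2 * φ x + ⟪a, x⟫ * fderiv ℝ φ x a) * h x ∂μ := by
  have ha : ContDiff ℝ 1 fun x : E => ⟪a, x⟫ := contDiff_const.inner ℝ contDiff_id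
  simp only [← mul_assoc]
  rw [integral_mul_fderiv_apply_of_hasCompactSupport (hφ.mul ha) hφc.mul_right hh]
  congr! 3 with x
  have hinner : HasFDerivAt (fun x : E => ⟪a, x⟫) (innerSL ℝ a) x := (innerSL ℝ a).hasFDerivAt
  rw [((hφ.differentiable one_ne_zero x).hasFDerivAt.fun_mul hinner).fderiv]
  simp [mul_comm]

theorem integral_mul_fderiv_apply_self (hφ : ContDiff ℝ 1 φ) (hφc : HasCompactSupport φ)
    (hh : ContDiff ℝ 1 h) :
    ∫ x, φ x * fderiv ℝ h x x ∂μ =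
      -∫ x, (Module.finrank ℝ E * φ x + fderiv ℝ φ x x) * h x ∂μ := by
  let e := stdOrthonormalBasis ℝ E
  have hc : ∀ i, ContDiff ℝ 1 fun x : E => ⟪e i, x⟫ := fun i => contDiff_const.inner ℝ contDiff_id
  have hDφ : ∀ i, Continuous fun x => fderiv ℝ φ x (e i) := fun i =>
    (hφ.continuous_fderiv one_ne_zero).clm_apply continuous_const
  have hDh : ∀ i, Continuous fun x => fderiv ℝ h x (e i) := fun i =>
    (hh.continuous_fderiv one_ne_zero).clm_apply continuous_const
  have hsum : ∀ x, ∑ i, (φ x + ⟪e i, x⟫ * fderiv ℝ φ x (e i)) * h x =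
      (Module.finrank ℝ E * φ x + fderiv ℝ φ x x) * h x := fun x => by
    simp [fderiv_apply_eq_sum e φ x x, ← Finset.sum_mul, Finset.sum_add_distrib]
  calc ∫ x, φ x * fderiv ℝ h x x ∂μ
      = ∫ x, ∑ i, φ x * (⟪e i, x⟫ * fderiv ℝ h x (e i)) ∂μ := by
        simp only [fun x => fderiv_apply_eq_sum e h x x, Finset.mul_sum]
    _ = -∑ i, ∫ x, (φ x + ⟪e i, x⟫ * fderiv ℝ φ x (e i)) * h x ∂μ := by
        rw [integral_finsetSum, ← Finset.sum_neg_distrib]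
        · exact Finset.sum_congr rfl fun i _ => by
            simpa using integral_mul_inner_mul_fderiv_apply hφ hφc hh (e i)
        · exact fun i _ => (hφ.continuous.mul ((hc i).continuous.mul
            (hDh i))).integrable_of_hasCompactSupport hφc.mul_right
    _ = -∫ x, (Module.finrank ℝ E * φ x + fderiv ℝ φ x x) * h x ∂μ := by
        rw [← integral_finsetSum]
        · simp only [hsum]
        · exact fun i _ => ((hφ.continuous.add ((hc i).continuous.mul (hDφ i))).mul
            hh.continuous).integrable_of_hasCompactSupport
              (hφc.add (hφc.fderiv_apply ℝ (e i)).mul_left).mul_right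

end IntegrationByParts

section Laplacian

variable {v φ : E2 → ℝ}

theorem gradient_apply (v : E2 → ℝ) (x : E2) (j : Fin 2) : (∇ v x) j = pd j v x := by
  rw [pd, ← inner_gradient_left, EuclideanSpace.inner_single_right]
  simp

theorem continuous_gradient {E : Type*} [NormedAddCommGroup E] [InnerProductSpace ℝ E]
    [CompleteSpace E] {v : E → ℝ} (hv : ContDiff ℝ 1 v) : Continuous (∇ v) :=
  (InnerProductSpace.toDual ℝ E).symm.continuous.comp (hv.continuous_fderiv one_ne_zero)

theorem contDiff_fderiv_apply {E : Type*} [NormedAddCommGroup E] [NormedSpace ℝ E] {v : E → ℝ}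
    (hv : ContDiff ℝ 2 v) (a : E) : ContDiff ℝ 1 fun x => fderiv ℝ v x a :=
  (hv.fderiv_right one_add_one_eq_two.le).clm_apply contDiff_const

theorem contDiff_one_pd (hv : ContDiff ℝ 2 v) (j : Fin 2) : ContDiff ℝ 1 (pd j v) :=
  contDiff_fderiv_apply hv _

theorem continuous_pd (hv : ContDiff ℝ 1 v) (j : Fin 2) : Continuous (pd j v) :=
  (hv.continuous_fderiv one_ne_zero).clm_apply continuous_const

theorem continuous_lapl (hv : ContDiff ℝ 2 v) : Continuous (lapl v) :=
  (continuous_pd (contDiff_one_pd hv 0) 0).add (continuous_pd (contDiff_one_pd hv 1) 1)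

theorem pd_eventuallyEq {u v : E2 → ℝ} {x : E2} (h : u =ᶠ[𝓝 x] v) (j : Fin 2) :
    pd j u =ᶠ[𝓝 x] pd j v :=
  h.fderiv.fun_comp fun L => L (EuclideanSpace.single j 1)

theorem lapl_congr {u v : E2 → ℝ} {x : E2} (h : u =ᶠ[𝓝 x] v) : lapl u x = lapl v x :=
  congrArg₂ (· + ·) (pd_eventuallyEq (pd_eventuallyEq h 0) 0).eq_of_nhds
    (pd_eventuallyEq (pd_eventuallyEq h 1) 1).eq_of_nhds

theorem pd_comp_add_smul (j : Fin 2) (u : E2 → ℝ) (x₀ : E2) (l : ℝ) :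
    pd j (fun z => u (x₀ + l • z)) = fun z => l * pd j u (x₀ + l • z) := by
  ext z
  rw [pd, fderiv_comp_smul (f := fun z => u (x₀ + z)), smul_apply, fderiv_comp_add_left]
  rfl

theorem pd_const_mul (j : Fin 2) (c : ℝ) (u : E2 → ℝ) :
    pd j (fun z => c * u z) = fun z => c * pd j u z := by
  ext z
  have hsmul : fderiv ℝ (fun w => c * u w) z = c • fderiv ℝ u z :=
    congrFun (fderiv_const_smul_field (𝕜 := ℝ) (f := u) c) z
  rw [pd, hsmul]
  rfl

theorem lapl_comp_add_smul_sub_const (u : E2 → ℝ) (x₀ : E2) (l c : ℝ) (x : E2) :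
    lapl (fun z => u (x₀ + l • z) - c) x = l ^ 2 * lapl u (x₀ + l • x) := by
  have hpd (j : Fin 2) :
      pd j (fun z => u (x₀ + l • z) - c) = fun z => l * pd j u (x₀ + l • z) := by
    rw [← pd_comp_add_smul]
    ext z
    rw [pd, fderiv_sub_const, pd]
  simp only [lapl, hpd, pd_const_mul, pd_comp_add_smul]
  ring

theorem lapl_comp_add_left (u : E2 → ℝ) (x₀ : E2) :
    lapl (fun z => u (x₀ + z)) = fun z => lapl u (x₀ + z) :=
  funext fun z => by simpa using lapl_comp_add_smul_sub_const u x₀ 1 0 z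

theorem fderiv_fderiv_apply_comm {E : Type*} [NormedAddCommGroup E] [NormedSpace ℝ E] {v : E → ℝ}
    (hv : ContDiff ℝ 2 v) (a c x : E) :
    fderiv ℝ (fun y => fderiv ℝ v y a) x c = fderiv ℝ (fun y => fderiv ℝ v y c) x a := by
  have hd : DifferentiableAt ℝ (fderiv ℝ v) x :=
    (hv.fderiv_right (m := 1) one_add_one_eq_two.le).differentiable one_ne_zero x
  simpa [fderiv_clm_apply hd (differentiableAt_const _)] using
    (hv.contDiffAt.isSymmSndFDerivAt (by simp)).eq c a

theorem integral_mul_lapl (hφ : ContDiff ℝ 1 φ) (hφc : HasCompactSupport φ)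
    (hv : ContDiff ℝ 2 v) : ∫ x, φ x * lapl v x = -∫ x, ⟪∇ φ x, ∇ v x⟫ := by
  have hint : ∀ j, Integrable fun x => φ x * pd j (pd j v) x := fun j =>
    (hφ.continuous.mul (continuous_pd (contDiff_one_pd hv j) j)).integrable_of_hasCompactSupport
      hφc.mul_right
  have hint' : ∀ j, Integrable fun x => pd j φ x * pd j v x := fun j =>
    ((continuous_pd hφ j).mul (contDiff_one_pd hv j).continuous).integrable_of_hasCompactSupport
      (hφc.fderiv_apply ℝ _).mul_right
  have hj : ∀ j, ∫ x, φ x * pd j (pd j v) x = -∫ x, pd j φ x * pd j v x := fun j =>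
    integral_mul_fderiv_apply_of_hasCompactSupport hφ hφc (contDiff_one_pd hv j) _
  simp only [lapl, mul_add, PiLp.inner_apply, gradient_apply, Fin.sum_univ_two,
    RCLike.inner_apply, conj_trivial]
  simp only [mul_comm (pd _ v _)]
  rw [integral_add (hint 0) (hint 1), integral_add (hint' 0) (hint' 1), hj, hj, neg_add]

theorem gradient_cap_pow {E : Type*} [NormedAddCommGroup E] [InnerProductSpace ℝ E]
    [CompleteSpace E] (R : ℝ) (n : ℕ) (x : E) :
    ∇ (fun x : E => cap R x ^ (n + 2)) x = (-(2 * (n + 2) / R ^ 2) * cap R x ^ (n + 1)) • x := by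
  refine ext_inner_right ℝ fun a => ?_
  rw [inner_gradient_left, fderiv_cap_pow_apply, real_inner_smul_left]

theorem integral_cap_pow_mul_lapl {R : ℝ} (hR : 0 < R) (n : ℕ) (hv : ContDiff ℝ 2 v) :
    ∫ x, cap R x ^ (n + 2) * lapl v x =
      2 * (n + 2) / R ^ 2 * ∫ x, cap R x ^ (n + 1) * fderiv ℝ v x x := by
  rw [integral_mul_lapl (contDiff_cap_pow R n) (hasCompactSupport_cap_pow hR (n + 1)) hv,
    ← integral_neg, ← integral_const_mul]
  refine integral_congr_ae (Eventually.of_forall fun x => ?_)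
  beta_reduce
  rw [gradient_cap_pow, real_inner_smul_left, inner_gradient_right, conj_trivial]
  ring

end Laplacian

section Scaling

variable {E : Type*} [NormedAddCommGroup E] [NormedSpace ℝ E] [FiniteDimensional ℝ E]
  [MeasurableSpace E] [BorelSpace E] {μ : Measure E} [μ.IsAddHaarMeasure]

theorem integral_cap_one_pow_mul_comp_smul {R : ℝ} (hR : 0 < R) (n : ℕ) (g : E → ℝ) :
    ∫ x, cap 1 x ^ n * g (R • x) ∂μ =
      (R ^ Module.finrank ℝ E)⁻¹ * ∫ x, cap R x ^ n * g x ∂μ := by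
  have h := Measure.integral_comp_smul μ (fun x => cap R x ^ n * g x) R
  simpa only [cap_smul hR, abs_of_pos (inv_pos.2 (pow_pos hR _)), smul_eq_mul] using h

end Scaling

section RadialIdentities

variable {v h : E2 → ℝ} {R : ℝ}

theorem integral_cap_pow_mul_fderiv_apply_self (hR : 0 < R) (n : ℕ) (hh : ContDiff ℝ 1 h) :
    ∫ x, cap R x ^ (n + 2) * fderiv ℝ h x x =
      -∫ x, ((2 * n + 6) * cap R x ^ (n + 2) - (2 * n + 4) * cap R x ^ (n + 1)) * h x := by
  rw [integral_mul_fderiv_apply_self (contDiff_cap_pow R n) (hasCompactSupport_cap_pow hR (n + 1))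
    hh]
  refine congrArg _ (integral_congr_ae (Eventually.of_forall fun x => ?_))
  beta_reduce
  rw [fderiv_cap_pow_apply_self, finrank_euclideanSpace, Fintype.card_fin]
  push_cast
  ring

theorem inner_gradient_cap_pow_mul_exp {E : Type*} [NormedAddCommGroup E] [InnerProductSpace ℝ E]
    [CompleteSpace E] {v : E → ℝ} (R : ℝ) (n : ℕ) {x : E} (hv : DifferentiableAt ℝ v x) :
    ⟪∇ (fun x => cap R x ^ (n + 2) * Real.exp (v x)) x, ∇ v x⟫ =
      cap R x ^ (n + 2) * (Real.exp (v x) * ‖∇ v x‖ ^ 2) - 2 * (n + 2) / R ^ 2 *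
        (cap R x ^ (n + 1) * fderiv ℝ (fun x => Real.exp (v x)) x x) := by
  have hsq : fderiv ℝ v x (∇ v x) = ‖∇ v x‖ ^ 2 := by
    rw [← inner_gradient_left, real_inner_self_eq_norm_sq]
  rw [inner_gradient_left, fderiv_fun_mul (hasFDerivAt_cap_pow R n x).differentiableAt hv.exp,
    fderiv_exp hv, add_apply, smul_apply, smul_apply, smul_apply, smul_apply,
    fderiv_cap_pow_apply, inner_gradient_right, conj_trivial, hsq]
  simp only [smul_eq_mul]
  ring

-- Caccioppoli's identity: the Laplacian tested against `χ e^v`, with the boundary term integrated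
-- by parts once more.
theorem integral_cap_pow_mul_exp_mul_norm_gradient_sq (hR : 0 < R) (hv : ContDiff ℝ 2 v) :
    ∫ x, cap R x ^ 3 * (Real.exp (v x) * ‖∇ v x‖ ^ 2) =
      (∫ x, cap R x ^ 3 * (Real.exp (v x) * -lapl v x)) +
        12 / R ^ 2 * ∫ x, (2 * cap R x - 3 * cap R x ^ 2) * Real.exp (v x) := by
  have hv1 : ContDiff ℝ 1 v := hv.of_le one_le_two
  have he : Continuous fun x => Real.exp (v x) := hv1.continuous.rexp
  have hgreen := integral_mul_lapl ((contDiff_cap_pow R 1).mul hv1.exp)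
    (hasCompactSupport_cap_pow hR 2).mul_right hv
  have heuler := integral_cap_pow_mul_fderiv_apply_self hR 0 hv1.exp
  have hexp : Integrable fun x => cap R x ^ 3 * (Real.exp (v x) * ‖∇ v x‖ ^ 2) :=
    integrable_cap_pow_mul hR 2 (he.mul ((continuous_gradient hv1).norm.pow 2))
  have hdiv : Integrable fun x => cap R x ^ 2 * fderiv ℝ (fun x => Real.exp (v x)) x x :=
    integrable_cap_pow_mul hR 1
      ((hv1.exp.continuous_fderiv one_ne_zero).clm_apply continuous_id)
  simp only [fun x => inner_gradient_cap_pow_mul_exp R 1 (hv1.differentiable one_ne_zero x)]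
    at hgreen
  rw [integral_sub hexp (hdiv.const_mul _), integral_const_mul] at hgreen
  have hneg : ∫ x, cap R x ^ 3 * (Real.exp (v x) * -lapl v x) =
      -∫ x, cap R x ^ (1 + 2) * Real.exp (v x) * lapl v x := by
    rw [← integral_neg]
    simp only [mul_neg, mul_assoc, Nat.reduceAdd]
  have hscale : ∫ x, ((2 * (0 : ℕ) + 6) * cap R x ^ (0 + 2) - (2 * (0 : ℕ) + 4) * cap R x ^ (0 + 1))
      * Real.exp (v x) = -2 * ∫ x, (2 * cap R x - 3 * cap R x ^ 2) * Real.exp (v x) := by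
    rw [← integral_const_mul]
    refine integral_congr_ae (Eventually.of_forall fun x => ?_)
    push_cast
    ring
  rw [hscale] at heuler
  push_cast at hgreen
  linear_combination hgreen - hneg + 6 / R ^ 2 * heuler

end RadialIdentities

section Mass

variable {v : E2 → ℝ} {k k' b : ℝ}

/-- The mass `∫_{|x| < k} -Δv` that `-Δv` puts on the disc of radius `k` centred at the origin. -/
noncomputable def laplMass (v : E2 → ℝ) (k : ℝ) : ℝ := ∫ x in ball (0 : E2) k, -lapl v x

theorem laplMass_nonneg (hf : ∀ x ∈ ball (0 : E2) k, 0 ≤ -lapl v x) : 0 ≤ laplMass v k :=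
  setIntegral_nonneg measurableSet_ball hf

theorem laplMass_mono (hv : ContDiff ℝ 2 v) (hf : ∀ x ∈ ball (0 : E2) k, 0 ≤ -lapl v x)
    (hk : k' ≤ k) : laplMass v k' ≤ laplMass v k :=
  setIntegral_mono_set (integrableOn_ball_of_continuous (continuous_lapl hv).neg 0 k)
    ((ae_restrict_mem measurableSet_ball).mono hf) (ball_subset_ball hk).eventuallyLE

theorem laplMass_le_mul_sq (hv : ContDiff ℝ 2 v) (hb : ∀ x ∈ ball (0 : E2) k, -lapl v x ≤ b)
    (hk : 0 ≤ k) : laplMass v k ≤ b * (Real.pi * k ^ 2) := by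
  have hvol : volume.real (ball (0 : E2) k) = Real.pi * k ^ 2 := by
    simp [Measure.real, EuclideanSpace.volume_ball_fin_two, Real.pi_pos.le, hk, mul_comm]
  have h := setIntegral_mono_on
    (integrableOn_ball_of_continuous (μ := volume) (continuous_lapl hv).neg 0 k)
    (integrableOn_ball_of_continuous continuous_const 0 k) measurableSet_ball hb
  rwa [setIntegral_const, hvol, smul_eq_mul, mul_comm _ b] at h

theorem neg_integral_cap_pow_mul_lapl_le_laplMass (hv : ContDiff ℝ 2 v) (hk : 0 < k) (n : ℕ)
    (hf : ∀ x ∈ ball (0 : E2) k, 0 ≤ -lapl v x) :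
    -∫ x, cap k x ^ (n + 1) * lapl v x ≤ laplMass v k := by
  rw [← integral_neg]
  simpa only [laplMass, mul_neg, Pi.neg_apply] using
    integral_cap_pow_mul_le (μ := volume) hk n (continuous_lapl hv).neg hf

end Mass

section MeanValue

variable {v : E2 → ℝ} {k l b : ℝ}

/-- The mean of `v` over the disc of radius `l`, weighted by the squared cap and normalised to
total weight `π / 3`. The weight makes the derivative in `l` an integral of `Δv`. -/
noncomputable def capMean (v : E2 → ℝ) (l : ℝ) : ℝ := ∫ w : E2, cap 1 w ^ 2 * v (l • w)

theorem capMean_zero (v : E2 → ℝ) : capMean v 0 = Real.pi / 3 * v 0 := by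
  simp [capMean, integral_mul_const, integral_cap_one_sq]

theorem capMean_eq (hl : 0 < l) (v : E2 → ℝ) :
    capMean v l = (l ^ 2)⁻¹ * ∫ x, cap l x ^ 2 * v x := by
  simpa only [capMean, finrank_euclideanSpace, Fintype.card_fin] using
    integral_cap_one_pow_mul_comp_smul (μ := volume) hl 2 v

theorem hasDerivAt_capMean (hv : ContDiff ℝ 1 v) (l : ℝ) :
    HasDerivAt (capMean v) (∫ w : E2, cap 1 w ^ 2 * fderiv ℝ v (l • w) w) l := by
  have hset : ∀ g : E2 → ℝ,
      ∫ w in closedBall (0 : E2) 1, cap 1 w ^ 2 * g w = ∫ w, cap 1 w ^ 2 * g w := fun g =>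
    setIntegral_eq_integral_of_forall_compl_eq_zero fun w hw => by
      rw [mem_closedBall_zero_iff, not_le] at hw
      simp [cap_eq_zero one_pos hw.le]
  have hcap := continuous_cap (E := E2) 1
  have hDv := hv.continuous_fderiv one_ne_zero
  have h := hasDerivAt_setIntegral_of_isCompact (μ := volume) (isCompact_closedBall (0 : E2) 1)
    (F := fun l w => cap 1 w ^ 2 * v (l • w))
    (F' := fun l w => cap 1 w ^ 2 * fderiv ℝ v (l • w) w)
    (fun l => (hcap.pow 2).mul (hv.continuous.comp (continuous_const_smul l)))
    (((hcap.comp continuous_snd).pow 2).mul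
      ((hDv.comp (by fun_prop : Continuous fun p : ℝ × E2 => p.1 • p.2)).clm_apply continuous_snd))
    (fun l w => (((hv.differentiable one_ne_zero (l • w)).hasFDerivAt.comp_hasDerivAt l
      (by simpa using (hasDerivAt_id l).smul_const w)).const_mul _)) l
  simp only [hset] at h
  exact h

theorem hasDerivAt_capMean_of_pos (hv : ContDiff ℝ 1 v) (hl : 0 < l) :
    HasDerivAt (capMean v) ((l ^ 3)⁻¹ * ∫ x, cap l x ^ 2 * fderiv ℝ v x x) l := by
  refine (hasDerivAt_capMean hv l).congr_deriv ?_
  have hscale : ∀ w : E2, cap 1 w ^ 2 * fderiv ℝ v (l • w) w =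
      l⁻¹ * (cap 1 w ^ 2 * fderiv ℝ v (l • w) (l • w)) := fun w => by
    rw [map_smul, smul_eq_mul]
    field_simp
  simp only [hscale]
  rw [integral_const_mul, integral_cap_one_pow_mul_comp_smul hl 2 fun x => fderiv ℝ v x x,
    finrank_euclideanSpace, Fintype.card_fin]
  field_simp

theorem hasDerivAt_capMean_lapl (hv : ContDiff ℝ 2 v) (hl : 0 < l) :
    HasDerivAt (capMean v) ((6 * l)⁻¹ * ∫ x, cap l x ^ 3 * lapl v x) l := by
  refine (hasDerivAt_capMean_of_pos (hv.of_le one_le_two) hl).congr_deriv ?_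
  rw [integral_cap_pow_mul_lapl hl 1 hv]
  push_cast
  field_simp
  ring

theorem neg_laplMass_div_le_deriv_capMean (hv : ContDiff ℝ 2 v) (hl : 0 < l)
    (hf : ∀ x ∈ ball (0 : E2) l, 0 ≤ -lapl v x) :
    -(laplMass v l / (6 * l)) ≤ deriv (capMean v) l := by
  rw [(hasDerivAt_capMean_lapl hv hl).deriv, div_eq_inv_mul, ← mul_neg]
  gcongr
  linarith [neg_integral_cap_pow_mul_lapl_le_laplMass hv hl 2 hf]

theorem sub_le_capMean_one (hv : ContDiff ℝ 2 v)
    (hf : ∀ x ∈ ball (0 : E2) 1, 0 ≤ -lapl v x) (hb : ∀ x ∈ ball (0 : E2) 1, -lapl v x ≤ b) :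
    Real.pi / 3 * v 0 - b ≤ capMean v 1 := by
  have hd := hasDerivAt_capMean (hv.of_le one_le_two)
  have hb0 : 0 ≤ b := (hf 0 (mem_ball_self one_pos)).trans (hb 0 (mem_ball_self one_pos))
  have hslope : ∀ l ∈ interior (Set.Icc (0 : ℝ) 1), -b ≤ deriv (capMean v) l := fun l hl => by
    obtain ⟨hl0, hl1⟩ := interior_Icc (a := (0 : ℝ)) ▸ hl
    have hsub := ball_subset_ball (x := (0 : E2)) hl1.le
    refine le_trans ?_ (neg_laplMass_div_le_deriv_capMean hv hl0 fun x hx => hf x (hsub hx))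
    have hmass := laplMass_le_mul_sq hv (fun x hx => hb x (hsub hx)) hl0.le
    have hpi : Real.pi * l ≤ 6 := by nlinarith [Real.pi_le_four]
    rw [neg_le_neg_iff, div_le_iff₀ (by positivity)]
    calc laplMass v l ≤ b * l * (Real.pi * l) := by linarith
      _ ≤ b * l * 6 := by gcongr
      _ = b * (6 * l) := by ring
  have h := (convex_Icc 0 1).mul_sub_le_image_sub_of_le_deriv
    (fun l _ => (hd l).continuousAt.continuousWithinAt)
    (fun l _ => (hd l).differentiableAt.differentiableWithinAt) hslope
    0 (by simp) 1 (by simp) zero_le_one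
  linarith [capMean_zero v]

theorem sub_laplMass_mul_log_le_capMean (hv : ContDiff ℝ 2 v)
    (hf : ∀ x ∈ ball (0 : E2) k, 0 ≤ -lapl v x) (hb : ∀ x ∈ ball (0 : E2) k, -lapl v x ≤ b)
    (hk : 1 ≤ k) :
    Real.pi / 3 * v 0 - b - laplMass v k / 6 * Real.log k ≤ capMean v k := by
  have hsub := ball_subset_ball (x := (0 : E2)) hk
  have hone := sub_le_capMean_one hv (fun x hx => hf x (hsub hx)) fun x hx => hb x (hsub hx)
  have hd : ∀ l, 0 < l → HasDerivAt (fun l => capMean v l + laplMass v k / 6 * Real.log l)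
      (deriv (capMean v) l + laplMass v k / 6 * l⁻¹) l := fun l hl =>
    (hasDerivAt_capMean_lapl hv hl).differentiableAt.hasDerivAt.add
      ((Real.hasDerivAt_log hl.ne').const_mul _)
  have hmono : MonotoneOn (fun l => capMean v l + laplMass v k / 6 * Real.log l)
      (Set.Icc 1 k) := by
    refine monotoneOn_of_deriv_nonneg (convex_Icc 1 k)
      (fun l hl => (hd l (one_pos.trans_le hl.1)).continuousAt.continuousWithinAt)
      (fun l hl => (hd l (one_pos.trans_le
        (interior_subset hl).1)).differentiableAt.differentiableWithinAt) fun l hl => ?_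
    obtain ⟨hl1, hlk⟩ := interior_subset hl
    have hl0 : 0 < l := one_pos.trans_le hl1
    have hderiv := neg_laplMass_div_le_deriv_capMean hv hl0
      fun x hx => hf x (ball_subset_ball hlk hx)
    have hmass : laplMass v l / (6 * l) ≤ laplMass v k / (6 * l) := by
      gcongr
      exact laplMass_mono hv hf hlk
    rw [(hd l hl0).deriv]
    linarith [show laplMass v k / 6 * l⁻¹ = laplMass v k / (6 * l) by field_simp]
  have h := hmono (Set.left_mem_Icc.2 hk) (Set.right_mem_Icc.2 hk) hk
  simp only [Real.log_one, mul_zero, add_zero] at h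
  linarith

theorem setIntegral_half_ball_le_neg_capMean (hv : Continuous v) (hk : 0 < k)
    (hv0 : ∀ x ∈ ball (0 : E2) k, v x ≤ 0) :
    ∫ x in ball (0 : E2) (k / 2), -v x ≤ 2 * k ^ 2 * -capMean v k := by
  have hint : IntegrableOn (fun x => 2 * (cap k x ^ 2 * -v x)) (ball (0 : E2) k) :=
    ((integrable_cap_pow_mul hk 1 hv.neg).const_mul 2).integrableOn
  have hsub : ball (0 : E2) (k / 2) ⊆ ball 0 k := ball_subset_ball (by linarith)
  calc ∫ x in ball (0 : E2) (k / 2), -v x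
      ≤ ∫ x in ball (0 : E2) (k / 2), 2 * (cap k x ^ 2 * -v x) := by
        refine setIntegral_mono_on (integrableOn_ball_of_continuous hv.neg _ _)
          (hint.mono_set hsub) measurableSet_ball fun x hx => ?_
        have hcap := one_sub_div_le_cap (mem_ball_zero_iff.1 hx).le k
        have hquarter : (k / 2) ^ 2 / k ^ 2 = 1 / 4 := by field_simp; norm_num
        have hhalf : 1 / 2 ≤ cap k x ^ 2 := by nlinarith
        nlinarith [hv0 x (hsub hx)]
    _ ≤ ∫ x in ball (0 : E2) k, 2 * (cap k x ^ 2 * -v x) := by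
        refine setIntegral_mono_set hint ((ae_restrict_mem measurableSet_ball).mono fun x hx => ?_)
          hsub.eventuallyLE
        have := hv0 x hx
        simp only [Pi.zero_apply]
        exact mul_nonneg zero_le_two (mul_nonneg (sq_nonneg _) (by linarith))
    _ = 2 * k ^ 2 * -capMean v k := by
        rw [integral_const_mul, setIntegral_ball_cap_pow_mul hk 1, capMean_eq hk]
        simp only [mul_neg, integral_neg]
        field_simp

-- Jensen's inequality, from the tangent line of `exp` at the mean.
theorem exp_capMean_le (hv : Continuous v) (hk : 0 < k) :
    Real.pi / 3 * Real.exp (3 / Real.pi * capMean v k) ≤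
      (k ^ 2)⁻¹ * ∫ x in ball (0 : E2) k, Real.exp (v x) := by
  set a := 3 / Real.pi * capMean v k with ha
  have hvk : Continuous fun w : E2 => v (k • w) := hv.comp (continuous_const_smul k)
  have hone : Integrable fun w : E2 => cap 1 w ^ 2 := by
    simpa using integrable_cap_pow_mul (μ := volume) (E := E2) one_pos 1
      (continuous_const (y := (1 : ℝ)))
  have hmean : Integrable fun w : E2 => cap 1 w ^ 2 * v (k • w) :=
    integrable_cap_pow_mul one_pos 1 hvk
  have htangent : ∫ w, Real.exp a * (1 - a) * cap 1 w ^ 2 +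
      Real.exp a * (cap 1 w ^ 2 * v (k • w)) ≤ ∫ w, cap 1 w ^ 2 * Real.exp (v (k • w)) := by
    refine integral_mono ((hone.const_mul _).add (hmean.const_mul _))
      (integrable_cap_pow_mul one_pos 1 hvk.rexp) fun w => ?_
    have h : Real.exp a * (v (k • w) - a + 1) ≤ Real.exp (v (k • w)) := by
      have hsplit : Real.exp (v (k • w)) = Real.exp a * Real.exp (v (k • w) - a) := by
        rw [← Real.exp_add, add_sub_cancel]
      rw [hsplit]
      gcongr
      exact Real.add_one_le_exp _
    nlinarith [mul_le_mul_of_nonneg_left h (sq_nonneg (cap 1 w))]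
  have hcap : ∫ w : E2, cap 1 w ^ 2 * v (k • w) = Real.pi / 3 * a := by
    rw [ha, ← capMean]
    field_simp
  calc Real.pi / 3 * Real.exp a
      ≤ ∫ w : E2, cap 1 w ^ 2 * Real.exp (v (k • w)) := by
        rw [integral_add (hone.const_mul _) (hmean.const_mul _), integral_const_mul,
          integral_const_mul, integral_cap_one_sq, hcap] at htangent
        linarith
    _ = (k ^ 2)⁻¹ * ∫ x, cap k x ^ 2 * Real.exp (v x) := capMean_eq hk fun x => Real.exp (v x)
    _ ≤ (k ^ 2)⁻¹ * ∫ x in ball (0 : E2) k, Real.exp (v x) := by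
        gcongr
        exact integral_cap_pow_mul_le hk 1 hv.rexp fun x _ => (Real.exp_pos _).le

end MeanValue

/-- A potential `v` normalised at its maximum, solving `-Δv = W e^v` on the disc of radius `k`
with `0 ≤ W ≤ b`, oscillation of `W` at most `η` about some constant and `∫ e^v ≤ C`: the class
in which blow-up sequences live after rescaling. The coefficient `W` is kept implicit as
`-Δv / e^v`. -/
structure IsApproxLiouville (b C k η : ℝ) (v : E2 → ℝ) : Prop where
  contDiff : ContDiff ℝ 2 v
  map_zero : v 0 = 0
  nonpos : ∀ x ∈ ball (0 : E2) k, v x ≤ 0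
  neg_lapl_nonneg : ∀ x ∈ ball (0 : E2) k, 0 ≤ -lapl v x
  neg_lapl_le_mul_exp : ∀ x ∈ ball (0 : E2) k, -lapl v x ≤ b * Real.exp (v x)
  exists_abs_sub_le : ∃ w : ℝ, ∀ x ∈ ball (0 : E2) k,
    |-lapl v x - w * Real.exp (v x)| ≤ η * Real.exp (v x)
  setIntegral_exp_le : ∫ x in ball (0 : E2) k, Real.exp (v x) ≤ C

namespace IsApproxLiouville

variable {b C k k' η η' : ℝ} {v : E2 → ℝ}

theorem continuous (h : IsApproxLiouville b C k η v) : Continuous v := h.contDiff.continuous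

theorem mono (h : IsApproxLiouville b C k η v) (hk : k' ≤ k) (hη : η ≤ η') :
    IsApproxLiouville b C k' η' v := by
  have hsub : ball (0 : E2) k' ⊆ ball 0 k := ball_subset_ball hk
  obtain ⟨w, hw⟩ := h.exists_abs_sub_le
  exact
    { contDiff := h.contDiff
      map_zero := h.map_zero
      nonpos := fun x hx => h.nonpos x (hsub hx)
      neg_lapl_nonneg := fun x hx => h.neg_lapl_nonneg x (hsub hx)
      neg_lapl_le_mul_exp := fun x hx => h.neg_lapl_le_mul_exp x (hsub hx)
      exists_abs_sub_le := ⟨w, fun x hx => (hw x (hsub hx)).trans (by gcongr)⟩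
      setIntegral_exp_le := (setIntegral_mono_set
        (integrableOn_ball_of_continuous h.continuous.rexp 0 k)
        (Eventually.of_forall fun _ => (Real.exp_pos _).le)
        hsub.eventuallyLE).trans h.setIntegral_exp_le }

theorem coeff_nonneg (h : IsApproxLiouville b C k η v) (hk : 0 < k) : 0 ≤ b := by
  have h0 := mem_ball_self (x := (0 : E2)) hk
  simpa [h.map_zero] using (h.neg_lapl_nonneg 0 h0).trans (h.neg_lapl_le_mul_exp 0 h0)

theorem osc_nonneg (h : IsApproxLiouville b C k η v) (hk : 0 < k) : 0 ≤ η := by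
  obtain ⟨w, hw⟩ := h.exists_abs_sub_le
  simpa [h.map_zero] using (abs_nonneg _).trans (hw 0 (mem_ball_self hk))

theorem const_nonneg (h : IsApproxLiouville b C k η v) : 0 ≤ C :=
  (integral_nonneg fun _ => (Real.exp_pos _).le).trans h.setIntegral_exp_le

theorem neg_lapl_le (h : IsApproxLiouville b C k η v) (x : E2) (hx : x ∈ ball (0 : E2) k) :
    -lapl v x ≤ b :=
  (h.neg_lapl_le_mul_exp x hx).trans (mul_le_of_le_one_right
    (h.coeff_nonneg (pos_of_mem_ball hx)) (Real.exp_le_one_iff.2 (h.nonpos x hx)))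

theorem laplMass_le (h : IsApproxLiouville b C k η v) (hk : 0 < k) : laplMass v k ≤ b * C :=
  calc laplMass v k ≤ ∫ x in ball (0 : E2) k, b * Real.exp (v x) :=
        setIntegral_mono_on
          (integrableOn_ball_of_continuous (continuous_lapl h.contDiff).neg 0 k)
          (integrableOn_ball_of_continuous (continuous_const.mul h.continuous.rexp) 0 k)
          measurableSet_ball h.neg_lapl_le_mul_exp
    _ = b * ∫ x in ball (0 : E2) k, Real.exp (v x) := integral_const_mul _ _
    _ ≤ b * C := by
        gcongr
        exacts [h.coeff_nonneg hk, h.setIntegral_exp_le]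

theorem neg_sub_le_capMean (h : IsApproxLiouville b C k η v) (hk : 1 ≤ k) :
    -b - laplMass v k / 6 * Real.log k ≤ capMean v k := by
  simpa [h.map_zero] using
    sub_laplMass_mul_log_le_capMean h.contDiff h.neg_lapl_nonneg h.neg_lapl_le hk

theorem setIntegral_half_ball_neg_le (h : IsApproxLiouville b C k η v) (hk : 1 ≤ k) :
    ∫ x in ball (0 : E2) (k / 2), -v x ≤
      2 * k ^ 2 * (b + laplMass v k / 6 * Real.log k) := by
  refine (setIntegral_half_ball_le_neg_capMean h.continuous (one_pos.trans_le hk)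
    h.nonpos).trans ?_
  gcongr
  linarith [h.neg_sub_le_capMean hk]

theorem pi_le_laplMass (h : IsApproxLiouville b C k η v) (hk : 1 ≤ k)
    (hCk : C * Real.exp b < k) : Real.pi ≤ laplMass v k := by
  by_contra! hlt
  have hk0 : 0 < k := one_pos.trans_le hk
  have hpi := Real.pi_gt_three
  have hmean : -b - Real.log k ≤ 3 / Real.pi * capMean v k := by
    have hcap : -b - Real.pi / 6 * Real.log k ≤ capMean v k := by
      refine le_trans ?_ (h.neg_sub_le_capMean hk)
      gcongr
      exact Real.log_nonneg hk
    have hle : 3 / Real.pi * b ≤ b :=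
      mul_le_of_le_one_left (h.coeff_nonneg hk0) ((div_le_one Real.pi_pos).2 hpi.le)
    calc -b - Real.log k ≤ -(3 / Real.pi * b) - 1 / 2 * Real.log k := by
          linarith [Real.log_nonneg hk]
      _ = 3 / Real.pi * (-b - Real.pi / 6 * Real.log k) := by field_simp; ring
      _ ≤ 3 / Real.pi * capMean v k := by gcongr
  have hexp : Real.exp (-b) / k ≤ C / k ^ 2 :=
    calc Real.exp (-b) / k = Real.exp (-b - Real.log k) := by rw [Real.exp_sub, Real.exp_log hk0]
      _ ≤ Real.exp (3 / Real.pi * capMean v k) := Real.exp_le_exp.2 hmean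
      _ ≤ Real.pi / 3 * Real.exp (3 / Real.pi * capMean v k) :=
          le_mul_of_one_le_left (Real.exp_pos _).le (by linarith)
      _ ≤ (k ^ 2)⁻¹ * ∫ x in ball (0 : E2) k, Real.exp (v x) := exp_capMean_le h.continuous hk0
      _ ≤ (k ^ 2)⁻¹ * C := by gcongr; exact h.setIntegral_exp_le
      _ = C / k ^ 2 := inv_mul_eq_div _ _
  rw [div_le_div_iff₀ hk0 (by positivity), Real.exp_neg, sq, ← mul_assoc] at hexp
  have := le_of_mul_le_mul_right hexp hk0
  rw [inv_mul_le_iff₀ (Real.exp_pos b)] at this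
  linarith

end IsApproxLiouville

section Pohozaev

variable {v : E2 → ℝ} {σ ρ : ℝ}

/-- The localised Pohozaev integral `∫ χ (-Δv) (x · ∇v)` with cutoff `χ = cap σ ^ 3`. -/
noncomputable def pohozaevIntegral (v : E2 → ℝ) (σ : ℝ) : ℝ :=
  ∫ x, cap σ x ^ 3 * (-lapl v x * fderiv ℝ v x x)

theorem integral_add_pohozaevIntegral (hσ : 0 < σ) (hv : ContDiff ℝ 2 v) (w : ℝ) :
    (∫ x, cap σ x ^ 2 * ((8 * cap σ x - 6) * -lapl v x)) + pohozaevIntegral v σ =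
      ∫ x, cap σ x ^ 2 * ((-lapl v x - w * Real.exp (v x)) *
        ((8 * cap σ x - 6) + cap σ x * fderiv ℝ v x x)) := by
  have hv1 : ContDiff ℝ 1 v := hv.of_le one_le_two
  have hf : Continuous fun x => -lapl v x := (continuous_lapl hv).neg
  have he : Continuous fun x => Real.exp (v x) := hv1.continuous.rexp
  have hT : Continuous fun x => fderiv ℝ v x x :=
    (hv1.continuous_fderiv one_ne_zero).clm_apply continuous_id
  have hZ : Continuous fun x : E2 => 8 * cap σ x - 6 :=
    ((continuous_cap σ).const_mul 8).sub continuous_const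
  have hfree : (∫ x, cap σ x ^ 2 * ((8 * cap σ x - 6) * Real.exp (v x))) +
      ∫ x, cap σ x ^ 3 * (Real.exp (v x) * fderiv ℝ v x x) = 0 := by
    have h := integral_cap_pow_mul_fderiv_apply_self hσ 1 hv1.exp
    have hexp : ∀ x, fderiv ℝ (fun x => Real.exp (v x)) x x = Real.exp (v x) * fderiv ℝ v x x :=
      fun x => by simp [fderiv_exp (hv1.differentiable one_ne_zero x)]
    simp only [hexp] at h
    rw [h, add_neg_eq_zero]
    refine integral_congr_ae (Eventually.of_forall fun x => ?_)
    push_cast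
    ring
  have hZf : Integrable fun x => cap σ x ^ 2 * ((8 * cap σ x - 6) * -lapl v x) :=
    integrable_cap_pow_mul hσ 1 (hZ.mul hf)
  have hZe : Integrable fun x => cap σ x ^ 2 * ((8 * cap σ x - 6) * Real.exp (v x)) :=
    integrable_cap_pow_mul hσ 1 (hZ.mul he)
  have hTf : Integrable fun x => cap σ x ^ 3 * (-lapl v x * fderiv ℝ v x x) :=
    integrable_cap_pow_mul hσ 2 (hf.mul hT)
  have hTe : Integrable fun x => cap σ x ^ 3 * (Real.exp (v x) * fderiv ℝ v x x) :=
    integrable_cap_pow_mul hσ 2 (he.mul hT)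
  calc _ = ((∫ x, cap σ x ^ 2 * ((8 * cap σ x - 6) * -lapl v x)) + pohozaevIntegral v σ) -
        w * ((∫ x, cap σ x ^ 2 * ((8 * cap σ x - 6) * Real.exp (v x))) +
          ∫ x, cap σ x ^ 3 * (Real.exp (v x) * fderiv ℝ v x x)) := by rw [hfree]; ring
    _ = _ := by
      rw [pohozaevIntegral, ← integral_add hZf hTf, ← integral_add hZe hTe, ← integral_const_mul]
      refine (integral_sub (hZf.add hTf) ((hZe.add hTe).const_mul w)).symm.trans
        (integral_congr_ae (Eventually.of_forall fun x => ?_))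
      simp only [Pi.add_apply]
      ring

theorem mul_laplMass_sub_le_integral (hρσ : ρ ≤ σ) (hσ : 0 < σ)
    (hv : ContDiff ℝ 2 v) (hf : ∀ x ∈ ball (0 : E2) σ, 0 ≤ -lapl v x) :
    (8 - 12 * (ρ ^ 2 / σ ^ 2)) * laplMass v ρ - 6 * laplMass v σ ≤
      ∫ x, cap σ x ^ 2 * ((8 * cap σ x - 6) * -lapl v x) := by
  have hfc : Continuous fun x => -lapl v x := (continuous_lapl hv).neg
  have hcap := continuous_cap (E := E2) σ
  have hZ : Continuous fun x => cap σ x ^ 2 * ((8 * cap σ x - 6) * -lapl v x) := by fun_prop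
  have hsub : ball (0 : E2) ρ ⊆ ball 0 σ := ball_subset_ball hρσ
  have hint : IntegrableOn (fun x => cap σ x ^ 2 * ((8 * cap σ x - 6) * -lapl v x) +
      6 * -lapl v x) (ball 0 σ) :=
    integrableOn_ball_of_continuous (hZ.add (hfc.const_mul 6)) 0 σ
  suffices h : (8 - 12 * (ρ ^ 2 / σ ^ 2)) * laplMass v ρ ≤
      ∫ x in ball (0 : E2) σ, cap σ x ^ 2 * ((8 * cap σ x - 6) * -lapl v x) + 6 * -lapl v x by
    rw [integral_add (integrableOn_ball_of_continuous hZ 0 σ)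
      (integrableOn_ball_of_continuous (hfc.const_mul 6) 0 σ), integral_const_mul,
      setIntegral_ball_cap_pow_mul hσ 1, ← laplMass] at h
    linarith
  calc (8 - 12 * (ρ ^ 2 / σ ^ 2)) * laplMass v ρ
      ≤ ∫ x in ball (0 : E2) ρ, cap σ x ^ 2 * ((8 * cap σ x - 6) * -lapl v x) +
          6 * -lapl v x := by
        rw [laplMass, ← integral_const_mul]
        refine setIntegral_mono_on (integrableOn_ball_of_continuous (hfc.const_mul _) 0 ρ)
          (hint.mono_set hsub) measurableSet_ball fun x hx => ?_
        have hq := one_sub_div_le_cap (mem_ball_zero_iff.1 hx).le σ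
        have hq0 := cap_nonneg σ x
        have hpoly : 8 - 12 * (ρ ^ 2 / σ ^ 2) ≤ cap σ x ^ 2 * (8 * cap σ x - 6) + 6 := by
          linarith [mul_nonneg (sq_nonneg (cap σ x - 1))
            (by linarith : 0 ≤ 8 * cap σ x + 10)]
        linarith [mul_le_mul_of_nonneg_right hpoly (hf x (hsub hx))]
    _ ≤ ∫ x in ball (0 : E2) σ, cap σ x ^ 2 * ((8 * cap σ x - 6) * -lapl v x) +
          6 * -lapl v x := by
        refine setIntegral_mono_set hint ((ae_restrict_mem measurableSet_ball).mono fun x hx => ?_)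
          hsub.eventuallyLE
        have hq0 := cap_nonneg σ x
        have hq1 : cap σ x ^ 2 ≤ 1 := pow_le_one₀ hq0 (cap_le_one σ x)
        have hpoly : 0 ≤ cap σ x ^ 2 * (8 * cap σ x - 6) + 6 := by
          nlinarith [mul_nonneg (sq_nonneg (cap σ x)) hq0]
        simp only [Pi.zero_apply]
        linarith [mul_nonneg hpoly (hf x hx)]

theorem abs_fderiv_apply_self_le {E : Type*} [NormedAddCommGroup E] [InnerProductSpace ℝ E]
    [CompleteSpace E] {x : E} (hx : ‖x‖ ≤ σ) (v : E → ℝ) :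
    |fderiv ℝ v x x| ≤ σ * (1 + ‖∇ v x‖ ^ 2) := by
  calc |fderiv ℝ v x x| = |⟪∇ v x, x⟫| := by rw [inner_gradient_left]
    _ ≤ ‖∇ v x‖ * ‖x‖ := abs_real_inner_le_norm _ _
    _ ≤ (1 + ‖∇ v x‖ ^ 2) * σ := by
        gcongr
        nlinarith [sq_nonneg (‖∇ v x‖ - 1)]
    _ = σ * (1 + ‖∇ v x‖ ^ 2) := mul_comm _ _

theorem cap_sq_mul_mul_le {E : Type*} [NormedAddCommGroup E] [InnerProductSpace ℝ E]
    [CompleteSpace E] {x : E} {a δ : ℝ} (ha : |a| ≤ δ) (hx : ‖x‖ ≤ σ) (v : E → ℝ) :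
    cap σ x ^ 2 * (a * ((8 * cap σ x - 6) + cap σ x * fderiv ℝ v x x)) ≤
      cap σ x ^ 2 * (δ * (6 + cap σ x * (σ * (1 + ‖∇ v x‖ ^ 2)))) := by
  have hq0 := cap_nonneg σ x
  have hq1 := cap_le_one σ x
  have hmult : |(8 * cap σ x - 6) + cap σ x * fderiv ℝ v x x| ≤
      6 + cap σ x * (σ * (1 + ‖∇ v x‖ ^ 2)) := by
    refine (abs_add_le _ _).trans (add_le_add (abs_le.2 ⟨?_, ?_⟩) ?_)
    · linarith
    · linarith
    · rw [abs_mul, abs_of_nonneg hq0]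
      gcongr
      exact abs_fderiv_apply_self_le hx v
  refine mul_le_mul_of_nonneg_left ((le_abs_self _).trans ?_) (sq_nonneg _)
  rw [abs_mul]
  exact mul_le_mul ha hmult (abs_nonneg _) ((abs_nonneg a).trans ha)

end Pohozaev

namespace IsApproxLiouville

variable {b C k η σ : ℝ} {v : E2 → ℝ}

theorem integral_cap_pow_mul_exp_le (h : IsApproxLiouville b C k η v) (hk : 0 < k) (n : ℕ) :
    ∫ x, cap k x ^ (n + 1) * Real.exp (v x) ≤ C :=
  (integral_cap_pow_mul_le hk n h.continuous.rexp fun _ _ => (Real.exp_pos _).le).trans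
    h.setIntegral_exp_le

theorem integral_cap_pow_mul_exp_mul_neg_lapl_le (h : IsApproxLiouville b C k η v) (hk : 0 < k)
    (n : ℕ) : ∫ x, cap k x ^ (n + 1) * (Real.exp (v x) * -lapl v x) ≤ b * C := by
  have he := h.continuous.rexp
  have hlapl := (continuous_lapl h.contDiff).neg
  calc ∫ x, cap k x ^ (n + 1) * (Real.exp (v x) * -lapl v x)
      ≤ ∫ x in ball (0 : E2) k, Real.exp (v x) * -lapl v x :=
        integral_cap_pow_mul_le hk n (he.mul hlapl) fun x hx =>
          mul_nonneg (Real.exp_pos _).le (h.neg_lapl_nonneg x hx)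
    _ ≤ ∫ x in ball (0 : E2) k, Real.exp (v x) * b :=
        setIntegral_mono_on (integrableOn_ball_of_continuous (he.mul hlapl) 0 k)
          (integrableOn_ball_of_continuous (he.mul continuous_const) 0 k) measurableSet_ball
          fun x hx => mul_le_mul_of_nonneg_left (h.neg_lapl_le x hx) (Real.exp_pos _).le
    _ ≤ b * C := by
        rw [integral_mul_const, mul_comm]
        exact mul_le_mul_of_nonneg_left h.setIntegral_exp_le (h.coeff_nonneg hk)

theorem integral_two_mul_cap_sub_mul_exp_le (h : IsApproxLiouville b C k η v) (hk : 0 < k) :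
    ∫ x, (2 * cap k x - 3 * cap k x ^ 2) * Real.exp (v x) ≤ 2 * C := by
  have he := h.continuous.rexp
  have hcap := continuous_cap (E := E2) k
  calc ∫ x, (2 * cap k x - 3 * cap k x ^ 2) * Real.exp (v x)
      = ∫ x, cap k x ^ (0 + 1) * ((2 - 3 * cap k x) * Real.exp (v x)) := by
        refine integral_congr_ae (Eventually.of_forall fun x => ?_)
        ring
    _ ≤ ∫ x, 2 * (cap k x ^ (0 + 1) * Real.exp (v x)) := by
        refine integral_mono (integrable_cap_pow_mul hk 0 (by fun_prop))
          ((integrable_cap_pow_mul hk 0 he).const_mul 2) fun x => ?_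
        have hq := cap_nonneg k x
        rw [mul_left_comm 2]
        gcongr
        linarith
    _ ≤ 2 * C := by
        rw [integral_const_mul]
        gcongr
        exact h.integral_cap_pow_mul_exp_le hk 0

theorem integral_exp_mul_norm_gradient_sq_le (h : IsApproxLiouville b C k η v) (hk : 1 ≤ k) :
    ∫ x, cap k x ^ 3 * (Real.exp (v x) * ‖∇ v x‖ ^ 2) ≤ (24 + b) * C := by
  have hk0 : 0 < k := one_pos.trans_le hk
  have hscale : 12 / k ^ 2 * ∫ x, (2 * cap k x - 3 * cap k x ^ 2) * Real.exp (v x) ≤ 24 * C :=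
    calc _ ≤ 12 / k ^ 2 * (2 * C) := by
          gcongr
          exact h.integral_two_mul_cap_sub_mul_exp_le hk0
      _ ≤ 12 * (2 * C) := by
          have := h.const_nonneg
          gcongr
          exact div_le_self (by norm_num) (one_le_pow₀ hk)
      _ = 24 * C := by ring
  rw [integral_cap_pow_mul_exp_mul_norm_gradient_sq hk0 h.contDiff]
  linarith [h.integral_cap_pow_mul_exp_mul_neg_lapl_le hk0 2]

theorem integral_cap_sq_mul_exp_mul_le (h : IsApproxLiouville b C k η v) (hk : 1 ≤ k) :
    ∫ x, cap k x ^ 2 * (Real.exp (v x) * (6 + cap k x * (k * (1 + ‖∇ v x‖ ^ 2)))) ≤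
      (6 + k * (25 + b)) * C := by
  have hk0 : 0 < k := one_pos.trans_le hk
  have he := h.continuous.rexp
  have hgrad := continuous_gradient (h.contDiff.of_le one_le_two)
  have h₁ : Integrable fun x => 6 * (cap k x ^ 2 * Real.exp (v x)) :=
    (integrable_cap_pow_mul hk0 1 he).const_mul 6
  have h₂ : Integrable fun x => k * (cap k x ^ 3 * Real.exp (v x)) :=
    (integrable_cap_pow_mul hk0 2 he).const_mul k
  have h₁₂ : Integrable fun x => 6 * (cap k x ^ 2 * Real.exp (v x)) +
      k * (cap k x ^ 3 * Real.exp (v x)) := h₁.add h₂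
  have h₃ : Integrable fun x => k * (cap k x ^ 3 * (Real.exp (v x) * ‖∇ v x‖ ^ 2)) :=
    (integrable_cap_pow_mul hk0 2 (he.mul (hgrad.norm.pow 2))).const_mul k
  calc ∫ x, cap k x ^ 2 * (Real.exp (v x) * (6 + cap k x * (k * (1 + ‖∇ v x‖ ^ 2))))
      = ∫ x, 6 * (cap k x ^ 2 * Real.exp (v x)) + k * (cap k x ^ 3 * Real.exp (v x)) +
          k * (cap k x ^ 3 * (Real.exp (v x) * ‖∇ v x‖ ^ 2)) := by
        refine integral_congr_ae (Eventually.of_forall fun x => ?_)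
        ring
    _ = 6 * (∫ x, cap k x ^ 2 * Real.exp (v x)) + k * (∫ x, cap k x ^ 3 * Real.exp (v x)) +
          k * ∫ x, cap k x ^ 3 * (Real.exp (v x) * ‖∇ v x‖ ^ 2) := by
        rw [integral_add h₁₂ h₃, integral_add h₁ h₂]
        simp only [integral_const_mul]
    _ ≤ 6 * C + k * C + k * ((24 + b) * C) := by
        gcongr
        exacts [h.integral_cap_pow_mul_exp_le hk0 1, h.integral_cap_pow_mul_exp_le hk0 2,
          h.integral_exp_mul_norm_gradient_sq_le hk]
    _ = (6 + k * (25 + b)) * C := by ring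

theorem integral_sub_le_neg_pohozaevIntegral (h : IsApproxLiouville b C k η v) (hk : 1 ≤ k) :
    (∫ x, cap k x ^ 2 * ((8 * cap k x - 6) * -lapl v x)) - η * ((6 + k * (25 + b)) * C) ≤
      -pohozaevIntegral v k := by
  have hk0 : 0 < k := one_pos.trans_le hk
  obtain ⟨w, hw⟩ := h.exists_abs_sub_le
  have hv1 : ContDiff ℝ 1 v := h.contDiff.of_le one_le_two
  have hcap := continuous_cap (E := E2) k
  have hlapl := continuous_lapl h.contDiff
  have hgrad := continuous_gradient hv1
  have hT : Continuous fun x => fderiv ℝ v x x :=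
    (hv1.continuous_fderiv one_ne_zero).clm_apply continuous_id
  have herr : ∫ x, cap k x ^ 2 * ((-lapl v x - w * Real.exp (v x)) *
        ((8 * cap k x - 6) + cap k x * fderiv ℝ v x x)) ≤ η * ((6 + k * (25 + b)) * C) :=
    calc _ ≤ ∫ x, η * (cap k x ^ 2 *
          (Real.exp (v x) * (6 + cap k x * (k * (1 + ‖∇ v x‖ ^ 2))))) := by
          refine integral_mono (integrable_cap_pow_mul hk0 1 (by fun_prop))
            ((integrable_cap_pow_mul hk0 1 (by fun_prop)).const_mul η) fun x => ?_
          rcases lt_or_ge ‖x‖ k with hx | hx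
          · rw [mul_left_comm η, ← mul_assoc η]
            exact cap_sq_mul_mul_le (hw x (mem_ball_zero_iff.2 hx)) hx.le v
          · simp [cap_eq_zero hk0 hx]
      _ ≤ η * ((6 + k * (25 + b)) * C) := by
          rw [integral_const_mul]
          exact mul_le_mul_of_nonneg_left (h.integral_cap_sq_mul_exp_mul_le hk) (h.osc_nonneg hk0)
  linarith [integral_add_pohozaevIntegral hk0 h.contDiff w]

end IsApproxLiouville

section MeanOfDerivative

theorem integral_cap_pow_mul_inner_mul_fderiv_comm {E : Type*} [NormedAddCommGroup E]
    [InnerProductSpace ℝ E] [FiniteDimensional ℝ E] [MeasurableSpace E] [BorelSpace E]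
    {μ : Measure E} [μ.IsAddHaarMeasure] {v : E → ℝ} {R : ℝ} (hR : 0 < R) (n : ℕ)
    (hv : ContDiff ℝ 2 v) (a c : E) :
    ∫ x, cap R x ^ (n + 2) * ⟪a, x⟫ * fderiv ℝ (fun y => fderiv ℝ v y c) x c ∂μ =
      ∫ x, cap R x ^ (n + 2) * ⟪c, x⟫ * fderiv ℝ (fun y => fderiv ℝ v y a) x c ∂μ := by
  have hDv := contDiff_fderiv_apply hv
  have hφ : ∀ d : E, ContDiff ℝ 1 fun x : E => cap R x ^ (n + 2) * ⟪d, x⟫ := fun d =>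
    (contDiff_cap_pow R n).mul (contDiff_const.inner ℝ contDiff_id)
  have hφc : ∀ d : E, HasCompactSupport fun x : E => cap R x ^ (n + 2) * ⟪d, x⟫ := fun _ =>
    (hasCompactSupport_cap_pow hR (n + 1)).mul_right
  have hφ' : ∀ d d' x : E, fderiv ℝ (fun x : E => cap R x ^ (n + 2) * ⟪d, x⟫) x d' =
      cap R x ^ (n + 2) * ⟪d, d'⟫ +
        ⟪d, x⟫ * (-(2 * (n + 2) / R ^ 2) * cap R x ^ (n + 1) * ⟪d', x⟫) := fun d d' x => by
    have hd : HasFDerivAt (fun x : E => ⟪d, x⟫) (innerSL ℝ d) x := (innerSL ℝ d).hasFDerivAt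
    rw [fderiv_fun_mul (hasFDerivAt_cap_pow R n x).differentiableAt hd.differentiableAt, hd.fderiv,
      add_apply, smul_apply, smul_apply, fderiv_cap_pow_apply, real_inner_comm d' x]
    simp
  rw [integral_mul_fderiv_apply_of_hasCompactSupport (hφ a) (hφc a) (hDv c)]
  simp only [fun x => fderiv_fderiv_apply_comm hv a c x]
  rw [integral_mul_fderiv_apply_of_hasCompactSupport (hφ c) (hφc c) (hDv c)]
  refine congrArg _ (integral_congr_ae (Eventually.of_forall fun x => ?_))
  simp only [hφ', real_inner_comm c a]
  ring

variable {v : E2 → ℝ} {R e l : ℝ}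

theorem integral_cap_pow_mul_inner_mul_lapl (hR : 0 < R) (n : ℕ) (hv : ContDiff ℝ 2 v) (a : E2) :
    ∫ x, cap R x ^ (n + 2) * (⟪a, x⟫ * lapl v x) =
      ∫ x, cap R x ^ (n + 2) * fderiv ℝ (fun y => fderiv ℝ v y a) x x := by
  let e : Fin 2 → E2 := fun j => EuclideanSpace.single j 1
  have hDDv : ∀ c d, Continuous fun x => fderiv ℝ (fun y => fderiv ℝ v y c) x d := fun c d =>
    ((contDiff_fderiv_apply hv c).continuous_fderiv one_ne_zero).clm_apply continuous_const
  have hint : ∀ b c d : E2, Integrable fun x => cap R x ^ (n + 2) * ⟪b, x⟫ *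
      fderiv ℝ (fun y => fderiv ℝ v y c) x d := fun b c d => by
    have h : Integrable fun x => cap R x ^ (n + 2) *
        (⟪b, x⟫ * fderiv ℝ (fun y => fderiv ℝ v y c) x d) :=
      integrable_cap_pow_mul hR (n + 1) ((continuous_const.inner continuous_id).mul (hDDv c d))
    simpa only [mul_assoc] using h
  have heuler : ∀ x, fderiv ℝ (fun y => fderiv ℝ v y a) x x =
      ∑ j, ⟪e j, x⟫ * fderiv ℝ (fun y => fderiv ℝ v y a) x (e j) := fun x => by
    simpa using fderiv_apply_eq_sum (EuclideanSpace.basisFun (Fin 2) ℝ)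
      (fun y => fderiv ℝ v y a) x x
  simp only [heuler, Fin.sum_univ_two, mul_add, ← mul_assoc, lapl]
  refine (integral_add (hint a (e 0) (e 0)) (hint a (e 1) (e 1))).trans
    (Eq.trans ?_ (integral_add (hint (e 0) a (e 0)) (hint (e 1) a (e 1))).symm)
  exact congrArg₂ _ (integral_cap_pow_mul_inner_mul_fderiv_comm hR n hv a (e 0))
    (integral_cap_pow_mul_inner_mul_fderiv_comm hR n hv a (e 1))

theorem hasDerivAt_capMean_fderiv (hv : ContDiff ℝ 2 v) (hl : 0 < l) (a : E2) :
    HasDerivAt (capMean fun x => fderiv ℝ v x a)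
      ((l ^ 3)⁻¹ * ∫ x, cap l x ^ 2 * (⟪a, x⟫ * lapl v x)) l := by
  rw [integral_cap_pow_mul_inner_mul_lapl hl 0 hv]
  exact hasDerivAt_capMean_of_pos (contDiff_fderiv_apply hv a) hl

theorem capMean_fderiv (hR : 0 < R) (hv : ContDiff ℝ 1 v) (a : E2) :
    capMean (fun x => fderiv ℝ v x a) R = 4 / R ^ 4 * ∫ x, cap R x * ⟪a, x⟫ * v x := by
  rw [capMean_eq hR, integral_mul_fderiv_apply_of_hasCompactSupport (contDiff_cap_pow R 0)
    (hasCompactSupport_cap_pow hR 1) hv, ← integral_neg, ← integral_const_mul,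
    ← integral_const_mul]
  refine integral_congr_ae (Eventually.of_forall fun x => ?_)
  beta_reduce
  rw [fderiv_cap_pow_apply, real_inner_comm a]
  simp only [CharP.cast_eq_zero, zero_add, pow_one]
  field_simp
  ring

end MeanOfDerivative

section AnnularKernel

variable {E : Type*} [NormedAddCommGroup E] {e R : ℝ}

/-- The radial kernel `(cap R z ^ 3 - cap e z ^ 3) / ‖z‖ ^ 2`, a truncation of `1 / ‖z‖ ^ 2`,
written as the integral over radii that arises from differentiating disc means. -/
noncomputable def annularKernel (e R : ℝ) (z : E) : ℝ := ∫ l in e..R, 6 * (l ^ 3)⁻¹ * cap l z ^ 2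

theorem annularKernel_nonneg (he : 0 < e) (heR : e ≤ R) (z : E) : 0 ≤ annularKernel e R z :=
  intervalIntegral.integral_nonneg heR fun l hl => by
    have := he.trans_le hl.1
    positivity

theorem annularKernel_eq_zero (he : 0 < e) (heR : e ≤ R) {z : E} (hz : R ≤ ‖z‖) :
    annularKernel e R z = 0 := by
  rw [annularKernel, intervalIntegral.integral_congr (g := fun _ => 0)]
  · simp
  · intro l hl
    rw [Set.uIcc_of_le heR] at hl
    simp [cap_eq_zero (he.trans_le hl.1) (hl.2.trans hz)]

theorem annularKernel_sub_rev (e R : ℝ) (x y : E) :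
    annularKernel e R (x - y) = annularKernel e R (y - x) := by
  simp only [annularKernel, cap, norm_sub_rev]

theorem continuousOn_uncurry_cap :
    ContinuousOn (fun p : ℝ × E => cap p.1 p.2) (Set.Ioi 0 ×ˢ Set.univ) := by
  unfold cap
  have : ∀ p ∈ Set.Ioi (0 : ℝ) ×ˢ (Set.univ : Set E), p.1 ^ 2 ≠ 0 := fun p hp =>
    (pow_pos (Set.mem_Ioi.1 hp.1) 2).ne'
  fun_prop (disch := assumption)

theorem continuousOn_uncurry_cap_sq_div_cube :
    ContinuousOn (fun p : ℝ × E => 6 * (p.1 ^ 3)⁻¹ * cap p.1 p.2 ^ 2)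
      (Set.Ioi 0 ×ˢ Set.univ) := by
  have hcap := continuousOn_uncurry_cap (E := E)
  have : ∀ p ∈ Set.Ioi (0 : ℝ) ×ˢ (Set.univ : Set E), p.1 ^ 3 ≠ 0 := fun p hp =>
    (pow_pos (Set.mem_Ioi.1 hp.1) 3).ne'
  fun_prop (disch := assumption)

theorem continuous_annularKernel (he : 0 < e) (heR : e ≤ R) :
    Continuous (annularKernel e R : E → ℝ) := by
  have hcont : ∀ z : E, ContinuousOn (fun l => 6 * (l ^ 3)⁻¹ * cap l z ^ 2) (Set.Icc e R) :=
    fun z => continuousOn_uncurry_cap_sq_div_cube.comp (f := fun l => (l, z)) (by fun_prop)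
      fun l hl => ⟨he.trans_le hl.1, trivial⟩
  have hpos : ∀ l ∈ Set.uIoc e R, 0 < l := fun l hl =>
    he.trans (Set.uIoc_of_le heR ▸ hl : l ∈ Set.Ioc e R).1
  refine intervalIntegral.continuous_of_dominated_interval (bound := fun l => 6 * (l ^ 3)⁻¹)
    (fun z => ?_) (fun z => Eventually.of_forall fun l hl => ?_) ?_
    (Eventually.of_forall fun l _ => by have := continuous_cap (E := E) l; fun_prop)
  · rw [Set.uIoc_of_le heR]
    exact ((hcont z).mono Set.Ioc_subset_Icc_self).aestronglyMeasurable measurableSet_Ioc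
  · have := hpos l hl
    rw [Real.norm_of_nonneg (by positivity)]
    exact mul_le_of_le_one_right (by positivity) (pow_le_one₀ (cap_nonneg l z) (cap_le_one l z))
  · refine ContinuousOn.intervalIntegrable_of_Icc heR ?_
    have : ∀ l ∈ Set.Icc e R, l ^ 3 ≠ 0 := fun l hl => (pow_pos (he.trans_le hl.1) 3).ne'
    fun_prop (disch := assumption)

theorem norm_sq_mul_annularKernel (he : 0 < e) (heR : e ≤ R) (z : E) :
    ‖z‖ ^ 2 * annularKernel e R z = cap R z ^ 3 - cap e z ^ 3 := by
  have hpos : ∀ l ∈ Set.uIcc e R, 0 < l := fun l hl =>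
    he.trans_le (Set.uIcc_of_le heR ▸ hl : l ∈ Set.Icc e R).1
  have hd : ∀ l ∈ Set.uIcc e R,
      HasDerivAt (fun l => cap l z ^ 3) (‖z‖ ^ 2 * (6 * (l ^ 3)⁻¹ * cap l z ^ 2)) l := by
    intro l hl
    have hl0 := (hpos l hl).ne'
    have hinner : HasDerivAt (fun l : ℝ => 1 - ‖z‖ ^ 2 / l ^ 2) (2 * ‖z‖ ^ 2 * (l ^ 3)⁻¹) l := by
      refine ((((hasDerivAt_pow 2 l).fun_inv (pow_ne_zero 2 hl0)).const_mul
        (‖z‖ ^ 2)).const_sub 1).congr_deriv ?_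
      field_simp
      norm_num
      ring
    refine ((hasDerivAt_max_zero_pow 1 _).comp l hinner).congr_deriv ?_
    rw [cap]
    push_cast
    ring
  rw [annularKernel, ← intervalIntegral.integral_const_mul]
  refine intervalIntegral.integral_eq_sub_of_hasDerivAt hd (ContinuousOn.intervalIntegrable
    (continuousOn_const.mul (continuousOn_uncurry_cap_sq_div_cube.comp (f := fun l => (l, z))
      (by fun_prop) fun l hl => ⟨hpos l hl, trivial⟩)))

theorem norm_sq_mul_annularKernel_le_one (he : 0 < e) (heR : e ≤ R) (z : E) :
    ‖z‖ ^ 2 * annularKernel e R z ≤ 1 := by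
  rw [norm_sq_mul_annularKernel he heR]
  linarith [pow_le_one₀ (n := 3) (cap_nonneg R z) (cap_le_one R z),
    pow_nonneg (cap_nonneg e z) 3]

end AnnularKernel

section KernelRepresentation

theorem integrable_prod_cap_sq_mul {E : Type*} [NormedAddCommGroup E] [ProperSpace E]
    [MeasurableSpace E] [BorelSpace E] {μ : Measure E} [IsFiniteMeasureOnCompacts μ] {e R : ℝ}
    {g : E → ℝ} (he : 0 < e) (hg : Continuous g) :
    Integrable (fun p : ℝ × E => 6 * (p.1 ^ 3)⁻¹ * cap p.1 p.2 ^ 2 * g p.2)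
      ((volume.restrict (Set.Ioc e R)).prod μ) := by
  have hK : IsCompact (Set.Icc e R ×ˢ closedBall (0 : E) R) :=
    isCompact_Icc.prod (isCompact_closedBall 0 R)
  have hcont : ContinuousOn (fun p : ℝ × E => 6 * (p.1 ^ 3)⁻¹ * cap p.1 p.2 ^ 2 * g p.2)
      (Set.Icc e R ×ˢ closedBall 0 R) :=
    (continuousOn_uncurry_cap_sq_div_cube.mul (hg.comp continuous_snd).continuousOn).mono
      fun p hp => ⟨he.trans_le hp.1.1, trivial⟩
  rw [← Measure.restrict_univ (μ := μ), Measure.prod_restrict]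
  refine (hcont.integrableOn_compact hK).of_forall_sdiff_eq_zero
    (measurableSet_Ioc.prod MeasurableSet.univ) fun p ⟨⟨hp, _⟩, hpK⟩ => ?_
  have hz : R ≤ ‖p.2‖ := le_of_not_ge fun h =>
    hpK ⟨Set.Ioc_subset_Icc_self hp, mem_closedBall_zero_iff.2 h⟩
  simp [cap_eq_zero (he.trans hp.1) (hp.2.trans hz)]

variable {v : E2 → ℝ} {e R : ℝ}

theorem integral_annularKernel_mul_inner_mul_lapl (he : 0 < e) (heR : e ≤ R)
    (hv : ContDiff ℝ 2 v) (a : E2) :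
    ∫ z, annularKernel e R z * (⟪a, z⟫ * lapl v z) =
      6 * (capMean (fun x => fderiv ℝ v x a) R - capMean (fun x => fderiv ℝ v x a) e) := by
  have hg : Continuous fun z => ⟪a, z⟫ * lapl v z :=
    (continuous_const.inner continuous_id).mul (continuous_lapl hv)
  have hint := integrable_prod_cap_sq_mul (μ := volume) (R := R) he hg
  have hslice : ∀ l, ∫ z, 6 * (l ^ 3)⁻¹ * cap l z ^ 2 * (⟪a, z⟫ * lapl v z) =
      6 * ((l ^ 3)⁻¹ * ∫ z, cap l z ^ 2 * (⟪a, z⟫ * lapl v z)) := fun l => by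
    simp only [mul_assoc, integral_const_mul]
  have hderiv : ∀ l ∈ Set.uIcc e R, HasDerivAt (fun l => 6 * capMean (fun x => fderiv ℝ v x a) l)
      (6 * ((l ^ 3)⁻¹ * ∫ z, cap l z ^ 2 * (⟪a, z⟫ * lapl v z))) l := fun l hl =>
    (hasDerivAt_capMean_fderiv hv
      (he.trans_le (Set.uIcc_of_le heR ▸ hl : l ∈ Set.Icc e R).1) a).const_mul 6
  calc ∫ z, annularKernel e R z * (⟪a, z⟫ * lapl v z)
      = ∫ z, ∫ l in Set.Ioc e R, 6 * (l ^ 3)⁻¹ * cap l z ^ 2 * (⟪a, z⟫ * lapl v z) := by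
        simp only [annularKernel, integral_mul_const, intervalIntegral.integral_of_le heR]
    _ = ∫ l in Set.Ioc e R, ∫ z, 6 * (l ^ 3)⁻¹ * cap l z ^ 2 * (⟪a, z⟫ * lapl v z) :=
        (integral_integral_swap hint).symm
    _ = ∫ l in e..R, 6 * ((l ^ 3)⁻¹ * ∫ z, cap l z ^ 2 * (⟪a, z⟫ * lapl v z)) := by
        simp only [hslice, intervalIntegral.integral_of_le heR]
    _ = 6 * (capMean (fun x => fderiv ℝ v x a) R - capMean (fun x => fderiv ℝ v x a) e) := by
        rw [intervalIntegral.integral_eq_sub_of_hasDerivAt hderiv, mul_sub]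
        rw [intervalIntegrable_iff_integrableOn_Ioc_of_le heR]
        exact hint.integral_prod_left.congr (Eventually.of_forall hslice)

theorem capMean_fderiv_add (he : 0 < e) (heR : e ≤ R) (hv : ContDiff ℝ 2 v) (x : E2) :
    6 * capMean (fun z => fderiv ℝ v (x + z) x) e =
      24 / R ^ 4 * (∫ y, cap R (y - x) * ⟪x, y - x⟫ * v y) -
        ∫ y, annularKernel e R (y - x) * (⟪x, y - x⟫ * lapl v y) := by
  have hu : ContDiff ℝ 2 fun z => v (x + z) := hv.comp (contDiff_const.add contDiff_id)
  have hR := capMean_fderiv (he.trans_le heR) (hu.of_le one_le_two) x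
  have hκ := integral_annularKernel_mul_inner_mul_lapl he heR hu x
  simp only [fderiv_comp_add_left, lapl_comp_add_left] at hR hκ
  have htrans : ∀ g : E2 → E2 → ℝ, ∫ y, g (y - x) y = ∫ z, g z (x + z) := fun g => by
    simpa using (integral_add_left_eq_self (fun y => g (y - x) y) x).symm
  rw [htrans fun z y => cap R z * ⟪x, z⟫ * v y,
    htrans fun z y => annularKernel e R z * (⟪x, z⟫ * lapl v y), hκ, hR]
  ring

end KernelRepresentation

section Interaction

variable {E : Type*} [NormedAddCommGroup E] {σ e R : ℝ} {f : E → ℝ}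

theorem cap_le_cap (R : ℝ) {x y : E} (h : ‖x‖ ≤ ‖y‖) : cap R y ≤ cap R x := by
  unfold cap
  gcongr

variable [InnerProductSpace ℝ E]

theorem inner_cap_pow_smul_sub_le (σ : ℝ) (n : ℕ) (x y : E) :
    ⟪cap σ x ^ n • x - cap σ y ^ n • y, x - y⟫ ≤ ‖x - y‖ ^ 2 := by
  set a := cap σ x ^ n
  set c := cap σ y ^ n
  have ha1 : a ≤ 1 := pow_le_one₀ (cap_nonneg σ x) (cap_le_one σ x)
  have hc1 : c ≤ 1 := pow_le_one₀ (cap_nonneg σ y) (cap_le_one σ y)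
  have hradial : 0 ≤ (‖x‖ - ‖y‖) * ((1 - a) * ‖x‖ - (1 - c) * ‖y‖) := by
    rcases le_total ‖x‖ ‖y‖ with h | h
    · have hca : c ≤ a := pow_le_pow_left₀ (cap_nonneg σ y) (cap_le_cap σ h) n
      refine mul_nonneg_of_nonpos_of_nonpos (sub_nonpos.2 h) (sub_nonpos.2 ?_)
      gcongr
    · have hac : a ≤ c := pow_le_pow_left₀ (cap_nonneg σ x) (cap_le_cap σ h) n
      refine mul_nonneg (sub_nonneg.2 h) (sub_nonneg.2 ?_)
      gcongr
  have hinner := mul_le_mul_of_nonneg_left (real_inner_le_norm x y)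
    (by linarith : 0 ≤ 2 - a - c)
  rw [norm_sub_sq_real]
  simp only [inner_sub_left, inner_sub_right, real_inner_smul_left, real_inner_self_eq_norm_sq,
    real_inner_comm x y]
  linarith

/-- The two-point density of the Pohozaev integral when `∇v` is expressed through the sources
`f = -Δv`, with the kernel `x / |x| ^ 2` of the gradient truncated to `e ≤ |x| ≤ R`. -/
noncomputable def interaction (f : E → ℝ) (σ e R : ℝ) (p : E × E) : ℝ :=
  cap σ p.1 ^ 3 * f p.1 * (annularKernel e R (p.2 - p.1) * ⟪p.1, p.1 - p.2⟫ * f p.2)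

theorem interaction_eq_zero (he : 0 < e) (heR : e ≤ R) (hσ : 0 < σ) (hσR : σ ≤ R) {p : E × E}
    (hp : p ∉ ball (0 : E) (2 * R) ×ˢ ball (0 : E) (2 * R)) : interaction f σ e R p = 0 := by
  rcases le_or_gt σ ‖p.1‖ with h1 | h1
  · simp [interaction, cap_eq_zero hσ h1]
  · have h2 : 2 * R ≤ ‖p.2‖ := le_of_not_gt fun h2 =>
      hp ⟨mem_ball_zero_iff.2 (by linarith), mem_ball_zero_iff.2 h2⟩
    have hsub : R ≤ ‖p.2 - p.1‖ := by linarith [norm_sub_norm_le p.2 p.1]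
    simp [interaction, annularKernel_eq_zero he heR hsub]

theorem interaction_add_swap_le (he : 0 < e) (heR : e ≤ R) {p : E × E} (h1 : 0 ≤ f p.1)
    (h2 : 0 ≤ f p.2) : interaction f σ e R p + interaction f σ e R p.swap ≤ f p.1 * f p.2 := by
  obtain ⟨x, y⟩ := p
  have hκ := annularKernel_nonneg he heR (x - y)
  calc interaction f σ e R (x, y) + interaction f σ e R (x, y).swap
      = f x * f y * (annularKernel e R (x - y) *
          ⟪cap σ x ^ 3 • x - cap σ y ^ 3 • y, x - y⟫) := by
        simp only [interaction, Prod.swap_prod_mk, annularKernel_sub_rev e R y x, inner_sub_left,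
          inner_sub_right, real_inner_smul_left]
        ring
    _ ≤ f x * f y * (annularKernel e R (x - y) * ‖x - y‖ ^ 2) := by
        have := inner_cap_pow_smul_sub_le σ 3 x y
        gcongr
    _ ≤ f x * f y := by
        refine mul_le_of_le_one_right (mul_nonneg h1 h2) ?_
        rw [mul_comm]
        exact norm_sq_mul_annularKernel_le_one he heR (x - y)

variable [ProperSpace E] [MeasurableSpace E] [BorelSpace E] {μ : Measure E}
  [IsFiniteMeasureOnCompacts μ]

theorem integrable_interaction (he : 0 < e) (heR : e ≤ R) (hσ : 0 < σ) (hσR : σ ≤ R)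
    (hf : Continuous f) : Integrable (interaction f σ e R) (μ.prod μ) := by
  have hκ := continuous_annularKernel (E := E) he heR
  have hcap := continuous_cap (E := E) σ
  have hcont : Continuous (interaction f σ e R) := by
    unfold interaction
    fun_prop
  refine hcont.integrable_of_hasCompactSupport (HasCompactSupport.intro
    ((isCompact_closedBall 0 (2 * R)).prod (isCompact_closedBall 0 (2 * R))) fun p hp => ?_)
  exact interaction_eq_zero he heR hσ hσR fun h =>
    hp (Set.prod_mono ball_subset_closedBall ball_subset_closedBall h)

-- Symmetrising in the two points makes the truncated kernel bounded by one.
theorem two_mul_integral_interaction_le (he : 0 < e) (heR : e ≤ R) (hσ : 0 < σ) (hσR : σ ≤ R)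
    (hf : Continuous f) (hf0 : ∀ x ∈ ball (0 : E) (2 * R), 0 ≤ f x) :
    2 * ∫ p, interaction f σ e R p ∂μ.prod μ ≤ (∫ x in ball 0 (2 * R), f x ∂μ) ^ 2 := by
  have hint := integrable_interaction (μ := μ) he heR hσ hσR hf
  have hff : IntegrableOn (fun p : E × E => f p.1 * f p.2)
      (ball (0 : E) (2 * R) ×ˢ ball (0 : E) (2 * R)) (μ.prod μ) :=
    ((hf.comp continuous_fst).mul (hf.comp continuous_snd)).continuousOn.integrableOn_compact
      ((isCompact_closedBall 0 (2 * R)).prod (isCompact_closedBall 0 (2 * R))) |>.mono_set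
        (Set.prod_mono ball_subset_closedBall ball_subset_closedBall)
  calc 2 * ∫ p, interaction f σ e R p ∂μ.prod μ
      = ∫ p, interaction f σ e R p + interaction f σ e R p.swap ∂μ.prod μ := by
        rw [two_mul]
        nth_rewrite 2 [← integral_prod_swap]
        exact (integral_add hint hint.swap).symm
    _ = ∫ p in ball 0 (2 * R) ×ˢ ball 0 (2 * R),
          interaction f σ e R p + interaction f σ e R p.swap ∂μ.prod μ := by
        refine (setIntegral_eq_integral_of_forall_compl_eq_zero fun p hp => ?_).symm
        have hswap : p.swap ∉ ball (0 : E) (2 * R) ×ˢ ball (0 : E) (2 * R) := fun h => hp h.symm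
        rw [interaction_eq_zero he heR hσ hσR hp, interaction_eq_zero he heR hσ hσR hswap,
          add_zero]
    _ ≤ ∫ p in ball 0 (2 * R) ×ˢ ball 0 (2 * R), f p.1 * f p.2 ∂μ.prod μ :=
        setIntegral_mono_on (hint.add hint.swap).integrableOn hff
          (measurableSet_ball.prod measurableSet_ball) fun p hp =>
            interaction_add_swap_le he heR (hf0 p.1 hp.1) (hf0 p.2 hp.2)
    _ = (∫ x in ball 0 (2 * R), f x ∂μ) ^ 2 := by rw [setIntegral_prod_mul, sq]

end Interaction

section SmoothedPohozaev

theorem continuous_integral_cap_pow_mul {X E : Type*} [TopologicalSpace X] [NormedAddCommGroup E]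
    [ProperSpace E] [MeasurableSpace E] [BorelSpace E] {μ : Measure E}
    [IsFiniteMeasureOnCompacts μ] {R : ℝ} (hR : 0 < R) (n : ℕ) {F : X → E → ℝ}
    (hF : Continuous F.uncurry) : Continuous fun t => ∫ x, cap R x ^ (n + 1) * F t x ∂μ := by
  rw [← continuousOn_univ]
  refine continuousOn_integral_of_compact_support (isCompact_closedBall 0 R)
    (((((continuous_cap R).comp continuous_snd).pow _).mul hF).continuousOn) fun t x _ hx => ?_
  rw [mem_closedBall_zero_iff, not_le] at hx
  simp [cap_eq_zero hR hx.le]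

theorem integral_cap_mul_inner_mul_le {E : Type*} [NormedAddCommGroup E] [InnerProductSpace ℝ E]
    [ProperSpace E] [MeasurableSpace E] [BorelSpace E] {μ : Measure E}
    [IsFiniteMeasureOnCompacts μ] {R σ : ℝ} (hσR : σ ≤ R) (hR : 0 < R) {g : E → ℝ}
    (hg : Continuous g) (hg0 : ∀ y ∈ ball (0 : E) (2 * R), 0 ≤ g y) {x : E} (hx : ‖x‖ ≤ σ) :
    ∫ y, cap R (y - x) * ⟪x, y - x⟫ * g y ∂μ ≤ σ * R * ∫ y in ball 0 (2 * R), g y ∂μ := by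
  have hcap := continuous_cap (E := E) R
  rw [← integral_const_mul, ← setIntegral_eq_integral_of_forall_compl_eq_zero
    (s := ball (0 : E) (2 * R))]
  · refine setIntegral_mono_on (integrableOn_ball_of_continuous (by fun_prop) 0 _)
      (integrableOn_ball_of_continuous (hg.const_mul _) 0 _) measurableSet_ball fun y hy => ?_
    have hσ0 := (norm_nonneg x).trans hx
    refine mul_le_mul_of_nonneg_right ?_ (hg0 y hy)
    rcases le_or_gt R ‖y - x‖ with hyx | hyx
    · rw [cap_eq_zero hR hyx, zero_mul]
      positivity
    · have hinner : ⟪x, y - x⟫ ≤ σ * R := (real_inner_le_norm _ _).trans (by gcongr)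
      calc cap R (y - x) * ⟪x, y - x⟫ ≤ cap R (y - x) * (σ * R) :=
            mul_le_mul_of_nonneg_left hinner (cap_nonneg R _)
        _ ≤ σ * R := mul_le_of_le_one_left (by positivity) (cap_le_one R _)
  · intro y hy
    rw [mem_ball_zero_iff, not_lt] at hy
    rw [cap_eq_zero hR (by linarith [norm_sub_norm_le y x]), zero_mul, zero_mul]

variable {v : E2 → ℝ} {σ e R : ℝ}

/-- The Pohozaev integral (up to the factor `2π`) with `∇v` replaced by its disc means of radius
`e`. The smoothing keeps the integral kernel of the gradient bounded until `e → 0`. -/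
noncomputable def smoothedPohozaevIntegral (v : E2 → ℝ) (σ e : ℝ) : ℝ :=
  ∫ x, cap σ x ^ 3 * (-lapl v x * (6 * capMean (fun z => fderiv ℝ v (x + z) x) e))

theorem continuous_capMean_fderiv_add (hv : ContDiff ℝ 1 v) :
    Continuous fun p : ℝ × E2 => capMean (fun z => fderiv ℝ v (p.2 + z) p.2) p.1 := by
  have := hv.continuous_fderiv one_ne_zero
  refine continuous_integral_cap_pow_mul one_pos 1
    (F := fun (p : ℝ × E2) w => fderiv ℝ v (p.2 + p.1 • w) p.2) ?_
  unfold Function.uncurry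
  fun_prop

theorem continuous_smoothedPohozaevIntegral (hσ : 0 < σ) (hv : ContDiff ℝ 2 v) :
    Continuous (smoothedPohozaevIntegral v σ) :=
  continuous_integral_cap_pow_mul hσ 2
    (F := fun e x => -lapl v x * (6 * capMean (fun z => fderiv ℝ v (x + z) x) e))
    (((continuous_lapl hv).comp continuous_snd).neg.mul
      ((continuous_capMean_fderiv_add (hv.of_le one_le_two)).const_mul 6))

theorem smoothedPohozaevIntegral_zero (v : E2 → ℝ) (σ : ℝ) :
    smoothedPohozaevIntegral v σ 0 = 2 * Real.pi * pohozaevIntegral v σ := by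
  rw [smoothedPohozaevIntegral, pohozaevIntegral, ← integral_const_mul]
  refine integral_congr_ae (Eventually.of_forall fun x => ?_)
  simp only [capMean_zero, add_zero]
  ring

theorem integral_interaction_neg_lapl (v : E2 → ℝ) (σ e R : ℝ) (x : E2) :
    ∫ y, interaction (fun x => -lapl v x) σ e R (x, y) = cap σ x ^ 3 * -lapl v x *
      ∫ y, annularKernel e R (y - x) * (⟪x, y - x⟫ * lapl v y) := by
  rw [← integral_const_mul]
  refine integral_congr_ae (Eventually.of_forall fun y => ?_)
  simp only [interaction, ← neg_sub y x, inner_neg_right]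
  ring

theorem neg_capMean_fderiv_add_le (hσR : σ ≤ R) (he : 0 < e) (heR : e ≤ R) (hv : ContDiff ℝ 2 v)
    (hv0 : ∀ x ∈ ball (0 : E2) (2 * R), v x ≤ 0) {x : E2} (hx : ‖x‖ ≤ σ) :
    -(6 * capMean (fun z => fderiv ℝ v (x + z) x) e) ≤
      (∫ y, annularKernel e R (y - x) * (⟪x, y - x⟫ * lapl v y)) +
        24 * σ / R ^ 3 * ∫ y in ball (0 : E2) (2 * R), -v y := by
  have hR := he.trans_le heR
  have hfar : -(24 / R ^ 4 * ∫ y, cap R (y - x) * ⟪x, y - x⟫ * v y) ≤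
      24 * σ / R ^ 3 * ∫ y in ball (0 : E2) (2 * R), -v y :=
    calc -(24 / R ^ 4 * ∫ y, cap R (y - x) * ⟪x, y - x⟫ * v y)
        = 24 / R ^ 4 * ∫ y, cap R (y - x) * ⟪x, y - x⟫ * -v y := by
          simp only [mul_neg, integral_neg]
      _ ≤ 24 / R ^ 4 * (σ * R * ∫ y in ball 0 (2 * R), -v y) := by
          gcongr
          exact integral_cap_mul_inner_mul_le hσR hR hv.continuous.neg
            (fun y hy => neg_nonneg.2 (hv0 y hy)) hx
      _ = 24 * σ / R ^ 3 * ∫ y in ball (0 : E2) (2 * R), -v y := by field_simp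
  rw [capMean_fderiv_add he heR hv x]
  linarith

theorem neg_cap_pow_mul_capMean_fderiv_add_le (hσ : 0 < σ) (hσR : σ ≤ R) (he : 0 < e) (heR : e ≤ R)
    (hv : ContDiff ℝ 2 v) (hv0 : ∀ x ∈ ball (0 : E2) (2 * R), v x ≤ 0)
    (hf : ∀ x ∈ ball (0 : E2) σ, 0 ≤ -lapl v x) (x : E2) :
    -(cap σ x ^ 3 * (-lapl v x * (6 * capMean (fun z => fderiv ℝ v (x + z) x) e))) ≤
      (∫ y, interaction (fun x => -lapl v x) σ e R (x, y)) +
        cap σ x ^ 3 * -lapl v x * (24 * σ / R ^ 3 * ∫ x in ball (0 : E2) (2 * R), -v x) := by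
  rcases le_or_gt σ ‖x‖ with hx | hx
  · simp [interaction, cap_eq_zero hσ hx]
  have hweight : 0 ≤ cap σ x ^ 3 * -lapl v x :=
    mul_nonneg (pow_nonneg (cap_nonneg σ x) 3) (hf x (mem_ball_zero_iff.2 hx))
  rw [integral_interaction_neg_lapl]
  linarith [mul_le_mul_of_nonneg_left
    (neg_capMean_fderiv_add_le hσR he heR hv hv0 hx.le) hweight]

theorem neg_smoothedPohozaevIntegral_le (hσ : 0 < σ) (hσR : σ ≤ R) (he : 0 < e) (heR : e ≤ R)
    (hv : ContDiff ℝ 2 v) (hv0 : ∀ x ∈ ball (0 : E2) (2 * R), v x ≤ 0)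
    (hf : ∀ x ∈ ball (0 : E2) (2 * R), 0 ≤ -lapl v x) :
    -smoothedPohozaevIntegral v σ e ≤ laplMass v (2 * R) ^ 2 / 2 +
      laplMass v (2 * R) * (24 * σ / R ^ 3 * ∫ x in ball (0 : E2) (2 * R), -v x) := by
  set D := 24 * σ / R ^ 3 * ∫ x in ball (0 : E2) (2 * R), -v x
  have hR := hσ.trans_le hσR
  have hball : ball (0 : E2) σ ⊆ ball 0 (2 * R) := ball_subset_ball (by linarith)
  have hfc : Continuous fun x => -lapl v x := (continuous_lapl hv).neg
  have hmean : Continuous fun x => 6 * capMean (fun z => fderiv ℝ v (x + z) x) e :=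
    ((continuous_capMean_fderiv_add (hv.of_le one_le_two)).comp
      (by fun_prop : Continuous fun x : E2 => (e, x))).const_mul 6
  have hcut : Integrable fun x => cap σ x ^ 3 * -lapl v x :=
    integrable_cap_pow_mul hσ 2 hfc
  have hinter := integrable_interaction (μ := (volume : Measure E2)) he heR hσ hσR hfc
  have hD0 : 0 ≤ D := mul_nonneg (by positivity)
    (setIntegral_nonneg measurableSet_ball fun x hx => neg_nonneg.2 (hv0 x hx))
  have hmass : ∫ x, cap σ x ^ 3 * -lapl v x ≤ laplMass v (2 * R) :=
    (integral_cap_pow_mul_le hσ 2 hfc fun x hx => hf x (hball hx)).trans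
      (laplMass_mono hv hf (by linarith))
  have hpair : 2 * _ ≤ laplMass v (2 * R) ^ 2 :=
    two_mul_integral_interaction_le (μ := (volume : Measure E2)) he heR hσ hσR hfc hf
  calc -smoothedPohozaevIntegral v σ e
      ≤ ∫ x, (∫ y, interaction (fun x => -lapl v x) σ e R (x, y)) +
          cap σ x ^ 3 * -lapl v x * D := by
        rw [smoothedPohozaevIntegral, ← integral_neg]
        exact integral_mono (integrable_cap_pow_mul hσ 2 (hfc.mul hmean)).neg
          (hinter.integral_prod_left.add (hcut.mul_const D))
          (neg_cap_pow_mul_capMean_fderiv_add_le hσ hσR he heR hv hv0 fun x hx => hf x (hball hx))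
    _ = (∫ p, interaction (fun x => -lapl v x) σ e R p ∂volume.prod volume) +
          (∫ x, cap σ x ^ 3 * -lapl v x) * D := by
        rw [integral_add hinter.integral_prod_left (hcut.mul_const D), integral_prod _ hinter,
          integral_mul_const]
    _ ≤ laplMass v (2 * R) ^ 2 / 2 + laplMass v (2 * R) * D := by
        gcongr
        linarith

theorem two_pi_mul_neg_pohozaevIntegral_le (hσ : 0 < σ) (hσR : σ ≤ R)
    (hv : ContDiff ℝ 2 v) (hv0 : ∀ x ∈ ball (0 : E2) (2 * R), v x ≤ 0)
    (hf : ∀ x ∈ ball (0 : E2) (2 * R), 0 ≤ -lapl v x) :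
    2 * Real.pi * -pohozaevIntegral v σ ≤ laplMass v (2 * R) ^ 2 / 2 +
      laplMass v (2 * R) * (24 * σ / R ^ 3 * ∫ x in ball (0 : E2) (2 * R), -v x) := by
  rw [mul_neg, ← smoothedPohozaevIntegral_zero]
  have hlim : Tendsto (fun e => -smoothedPohozaevIntegral v σ e) (𝓝[>] 0)
      (𝓝 (-smoothedPohozaevIntegral v σ 0)) :=
    (continuous_smoothedPohozaevIntegral hσ hv).neg.continuousAt.tendsto.mono_left
      nhdsWithin_le_nhds
  refine le_of_tendsto hlim ?_
  filter_upwards [Ioc_mem_nhdsGT (hσ.trans_le hσR)] with e he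
  exact neg_smoothedPohozaevIntegral_le hσ hσR he.1 he.2 hv hv0 hf

end SmoothedPohozaev

namespace IsApproxLiouville

variable {b C k η σ ρ : ℝ} {v : E2 → ℝ}

theorem mul_laplMass_sub_le_neg_pohozaevIntegral (h : IsApproxLiouville b C σ η v) (hρσ : ρ ≤ σ)
    (hσ : 1 ≤ σ) :
    (8 - 12 * (ρ ^ 2 / σ ^ 2)) * laplMass v ρ - 6 * laplMass v σ -
      η * ((6 + σ * (25 + b)) * C) ≤ -pohozaevIntegral v σ := by
  linarith [h.integral_sub_le_neg_pohozaevIntegral hσ,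
    mul_laplMass_sub_le_integral hρσ (one_pos.trans_le hσ) h.contDiff h.neg_lapl_nonneg]

theorem neg_pohozaevIntegral_le (h : IsApproxLiouville b C k η v) (hk : 1 ≤ k) (hσ : 0 < σ)
    (hσk : 4 * σ ≤ k) :
    -pohozaevIntegral v σ ≤ laplMass v k ^ 2 / (4 * Real.pi) +
      b * C * (24 * σ / (k / 4) ^ 3 * (2 * k ^ 2 * (b + b * C / 6 * Real.log k))) := by
  have hk0 : 0 < k := one_pos.trans_le hk
  have hpi : 1 ≤ 2 * Real.pi := by linarith [Real.pi_gt_three]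
  have hsub : ball (0 : E2) (k / 2) ⊆ ball 0 k := ball_subset_ball (by linarith)
  have hlog := Real.log_nonneg hk
  have hf : ∀ x ∈ ball (0 : E2) (k / 2), 0 ≤ -lapl v x := fun x hx => h.neg_lapl_nonneg x (hsub hx)
  have hmass : laplMass v (k / 2) ≤ laplMass v k :=
    laplMass_mono h.contDiff h.neg_lapl_nonneg (by linarith)
  have hmassB := h.laplMass_le hk0
  have hmass0 := laplMass_nonneg hf
  have hneg : ∫ x in ball (0 : E2) (k / 2), -v x ≤
      2 * k ^ 2 * (b + b * C / 6 * Real.log k) :=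
    (h.setIntegral_half_ball_neg_le hk).trans (by gcongr)
  set T := 24 * σ / (k / 4) ^ 3 * (2 * k ^ 2 * (b + b * C / 6 * Real.log k))
  have hupper : 2 * Real.pi * -pohozaevIntegral v σ ≤ laplMass v k ^ 2 / 2 + b * C * T := by
    have h2 := two_pi_mul_neg_pohozaevIntegral_le (R := k / 4) hσ (by linarith) h.contDiff
      (fun x hx => h.nonpos x (hsub (by convert hx using 2; ring)))
      (fun x hx => h.neg_lapl_nonneg x (hsub (by convert hx using 2; ring)))
    rw [show 2 * (k / 4) = k / 2 by ring] at h2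
    have hneg0 : 0 ≤ ∫ x in ball (0 : E2) (k / 2), -v x :=
      setIntegral_nonneg measurableSet_ball fun x hx => neg_nonneg.2 (h.nonpos x (hsub hx))
    refine h2.trans ?_
    gcongr
    exacts [hmass0.trans (hmass.trans hmassB), hmass.trans hmassB,
      mul_le_mul_of_nonneg_left hneg (by positivity)]
  have hT : 0 ≤ b * C * T := by
    have hb := h.coeff_nonneg hk0
    have hC := h.const_nonneg
    positivity
  refine le_of_mul_le_mul_left (hupper.trans ?_) Real.two_pi_pos
  calc laplMass v k ^ 2 / 2 + b * C * T ≤ laplMass v k ^ 2 / 2 + 2 * Real.pi * (b * C * T) := by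
        linarith [mul_le_mul_of_nonneg_right hpi hT]
    _ = 2 * Real.pi * (laplMass v k ^ 2 / (4 * Real.pi) + b * C * T) := by field_simp; ring

end IsApproxLiouville

theorem tendsto_farField_bound (b B σ : ℝ) :
    Tendsto (fun k : ℝ => B * (24 * σ / (k / 4) ^ 3 * (2 * k ^ 2 * (b + B / 6 * Real.log k))))
      atTop (𝓝 0) := by
  have hlog : Tendsto (fun k : ℝ => Real.log k / k) atTop (𝓝 0) := by
    simpa using Real.tendsto_pow_log_div_mul_add_atTop 1 0 1 one_ne_zero
  have hlim := ((tendsto_inv_atTop_zero.const_mul b).add (hlog.const_mul (B / 6))).const_mul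
    (B * (3072 * σ))
  simp only [mul_zero, add_zero] at hlim
  refine hlim.congr' ?_
  filter_upwards [eventually_gt_atTop 0] with k hk
  field_simp
  ring

theorem exists_laplMass_mul_le {b C κ ρ : ℝ} (hb : 0 ≤ b) (hC : 0 ≤ C) (hκ : 0 < κ)
    (hρ : 1 ≤ ρ) :
    ∃ k ≥ ρ, ∃ η > 0, ∀ v, IsApproxLiouville b C k η v →
      laplMass v k * (2 - laplMass v k / (4 * Real.pi)) ≤
        κ + 8 * (laplMass v k - laplMass v ρ) := by
  have hκ3 : 0 < κ / 3 := by positivity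
  have hcutlim : Tendsto (fun σ : ℝ => 12 * (ρ ^ 2 / σ ^ 2) * (b * C)) atTop (𝓝 0) := by
    simpa using (((tendsto_pow_atTop two_ne_zero).const_div_atTop (ρ ^ 2)).const_mul 12).mul_const
      (b * C)
  obtain ⟨σ, hcut, hρσ⟩ :=
    ((hcutlim.eventually_le_const hκ3).and (eventually_ge_atTop ρ)).exists
  obtain ⟨k, hfar, hσk⟩ := (((tendsto_farField_bound b (b * C) σ).eventually_le_const hκ3).and
    (eventually_ge_atTop (4 * σ))).exists
  have hσ : 1 ≤ σ := hρ.trans hρσ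
  set Q := (6 + σ * (25 + b)) * C
  have : 0 ≤ Q := by positivity
  have hη : κ / (3 * (Q + 1)) * Q ≤ κ / 3 := by
    rw [div_mul_eq_mul_div, div_le_div_iff₀ (by positivity) (by norm_num)]
    nlinarith
  refine ⟨k, by linarith, κ / (3 * (Q + 1)), by positivity, fun v h => ?_⟩
  have hlow := (h.mono (by linarith) le_rfl).mul_laplMass_sub_le_neg_pohozaevIntegral hρσ hσ
  have hup := h.neg_pohozaevIntegral_le (by linarith) (one_pos.trans_le hσ) hσk
  have hmono : ∀ l ≤ k, laplMass v l ≤ laplMass v k := fun l hl =>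
    laplMass_mono h.contDiff h.neg_lapl_nonneg hl
  have hmassρ : 12 * (ρ ^ 2 / σ ^ 2) * laplMass v ρ ≤ κ / 3 :=
    (mul_le_mul_of_nonneg_left ((hmono ρ (by linarith)).trans (h.laplMass_le (by linarith)))
      (by positivity)).trans hcut
  have hquad : laplMass v k * (2 - laplMass v k / (4 * Real.pi)) =
      2 * laplMass v k - laplMass v k ^ 2 / (4 * Real.pi) := by ring
  linarith [hmono σ (by linarith)]

theorem eight_pi_mul_one_sub_le_of_mul_le {M ε : ℝ} (hM : Real.pi ≤ M) (hε : 0 ≤ ε)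
    (h : M * (2 - M / (4 * Real.pi)) ≤ 2 * Real.pi * ε) : 8 * Real.pi * (1 - ε) ≤ M := by
  have hpi := Real.pi_pos
  by_contra! hlt
  have hgap : 2 * ε < 2 - M / (4 * Real.pi) := by
    rw [lt_sub_comm, div_lt_iff₀ (by positivity)]
    linarith
  nlinarith

theorem exists_eight_pi_mul_one_sub_le_laplMass {b C ε : ℝ} (hb : 0 ≤ b) (hC : 0 ≤ C)
    (hε : 0 < ε) :
    ∃ k > 0, ∃ η > 0, ∀ v, IsApproxLiouville b C k η v →
      8 * Real.pi * (1 - ε) ≤ laplMass v k := by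
  set ρ₀ := 1 + C * Real.exp b
  have hρ₀1 : 1 ≤ ρ₀ := le_add_of_nonneg_right (by positivity)
  set c := 2 * Real.pi * ε / 9 with hc
  have hc0 : 0 < c := by positivity
  have hstep : ∀ n : ℕ, ∃ k ≥ ρ₀, ∃ η > 0, ∀ v, IsApproxLiouville b C k η v →
      8 * Real.pi * (1 - ε) ≤ laplMass v k ∨ n * c ≤ laplMass v k := by
    intro n
    induction n with
    | zero => exact ⟨ρ₀, le_rfl, 1, one_pos, fun v h =>
        Or.inr (by simpa using laplMass_nonneg h.neg_lapl_nonneg)⟩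
    | succ n ih =>
      obtain ⟨k, hk, η, hη, hkη⟩ := ih
      obtain ⟨k', hk', η', hη', hkη'⟩ := exists_laplMass_mul_le hb hC hc0 (hρ₀1.trans hk)
      refine ⟨k', hk.trans hk', min η η', lt_min hη hη', fun v h => ?_⟩
      have hmono := laplMass_mono h.contDiff h.neg_lapl_nonneg hk'
      have hquad := hkη' v (h.mono le_rfl (min_le_right _ _))
      rcases hkη v (h.mono hk' (min_le_left _ _)) with hdone | hn
      · exact Or.inl (hdone.trans hmono)
      rcases le_total (laplMass v k' - laplMass v k) c with hsmall | hlarge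
      · refine Or.inl (eight_pi_mul_one_sub_le_of_mul_le
          (h.pi_le_laplMass (by linarith) (by linarith)) hε.le ?_)
        linarith
      · right
        push_cast
        linarith
  obtain ⟨n, hn⟩ := exists_nat_gt (b * C / c)
  rw [div_lt_iff₀ hc0] at hn
  obtain ⟨k, hk, η, hη, hkη⟩ := hstep n
  have hk0 : 0 < k := by linarith
  refine ⟨k, hk0, η, hη, fun v h => ?_⟩
  rcases hkη v h with hdone | hnc
  · exact hdone
  · linarith [h.laplMass_le hk0]

open scoped Pointwise in
theorem setIntegral_ball_comp_add_smul {E : Type*} [NormedAddCommGroup E] [NormedSpace ℝ E]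
    [MeasurableSpace E] [BorelSpace E] [FiniteDimensional ℝ E] {μ : Measure E}
    [μ.IsAddHaarMeasure] (F : E → ℝ) (x₀ : E) {r : ℝ} (hr : 0 < r) (k : ℝ) :
    r ^ Module.finrank ℝ E * ∫ x in ball 0 k, F (x₀ + r • x) ∂μ =
      ∫ y in ball x₀ (k * r), F y ∂μ := by
  have hball : r • ball (0 : E) k = (x₀ + ·) ⁻¹' ball x₀ (k * r) := by
    rw [_root_.smul_ball hr.ne', smul_zero, preimage_add_ball, sub_self, Real.norm_of_nonneg hr.le,
      mul_comm]
  rw [Measure.setIntegral_comp_smul_of_pos μ (fun z => F (x₀ + z)) (ball 0 k) hr, hball,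
    (measurePreserving_add_left μ x₀).setIntegral_preimage_emb
      (measurableEmbedding_addLeft x₀), smul_eq_mul, mul_inv_cancel_left₀ (by positivity)]

theorem exists_contDiff_eqOn_ball {E : Type*} [NormedAddCommGroup E] [NormedSpace ℝ E]
    [HasContDiffBump E] {n : ℕ∞} {f : E → ℝ} {c : E} {ρ R : ℝ} (hρ : 0 < ρ) (hρR : ρ < R)
    (hf : ContDiffOn ℝ n f (ball c R)) : ∃ g, ContDiff ℝ n g ∧ Set.EqOn g f (ball c ρ) := by
  let χ : ContDiffBump c := ⟨ρ, (ρ + R) / 2, hρ, by linarith⟩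
  have hχR : χ.rOut < R := by
    change (ρ + R) / 2 < R
    linarith
  refine ⟨fun x => χ x • f x, contMDiff_iff_contDiff.1 (contMDiff_of_tsupport fun _ hx =>
    contMDiffAt_iff_contDiffAt.2 ?_), fun x hx => ?_⟩
  · have hx := tsupport_smul_subset_left _ _ hx
    rw [χ.tsupport_eq] at hx
    exact χ.contDiffAt.smul (hf.contDiffAt
      (isOpen_ball.mem_nhds (closedBall_subset_ball hχR hx)))
  · beta_reduce
    rw [χ.one_of_mem_closedBall (ball_subset_closedBall hx), one_smul]

theorem eqOn_lapl {s : Set E2} (hs : IsOpen s) {u v : E2 → ℝ} (h : s.EqOn u v) :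
    s.EqOn (lapl u) (lapl v) := fun _ hx =>
  lapl_congr (h.eventuallyEq_of_mem (hs.mem_nhds hx))

theorem integrableOn_ball_lapl {u : E2 → ℝ} {c : E2} {ρ R : ℝ} (hρ : 0 < ρ) (hρR : ρ < R)
    (hu : ContDiffOn ℝ 2 u (ball c R)) : IntegrableOn (lapl u) (ball c ρ) := by
  obtain ⟨g, hg, hgu⟩ := exists_contDiff_eqOn_ball (n := 2) hρ hρR hu
  exact (integrableOn_ball_of_continuous (continuous_lapl hg) c ρ).congr_fun
    (eqOn_lapl isOpen_ball hgu) measurableSet_ball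

theorem setIntegral_exp_mono {X : Type*} [TopologicalSpace X] [T2Space X] [MeasurableSpace X]
    [OpensMeasurableSpace X] {μ : Measure X} [IsFiniteMeasureOnCompacts μ] {u : X → ℝ}
    {s t K : Set X} (hK : IsCompact K) (hu : ContinuousOn u K) (hst : s ⊆ t) (htK : t ⊆ K) :
    ∫ x in s, Real.exp (u x) ∂μ ≤ ∫ x in t, Real.exp (u x) ∂μ :=
  setIntegral_mono_set ((hu.rexp.integrableOn_compact hK).mono_set htK)
    (Eventually.of_forall fun _ => (Real.exp_pos _).le) hst.eventuallyLE

theorem setIntegral_ball_mul_exp_mono {u V : E2 → ℝ} {x₀ : E2} {ρ' ρ R : ℝ} (hρ : 0 < ρ)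
    (hρ' : ρ' ≤ ρ) (hρR : ρ < R) (hu : ContDiffOn ℝ 2 u (ball x₀ R))
    (hV : ∀ y ∈ ball x₀ ρ, 0 ≤ V y)
    (hpde : ∀ y ∈ ball x₀ ρ, -lapl u y = V y * Real.exp (u y)) :
    ∫ y in ball x₀ ρ', V y * Real.exp (u y) ≤ ∫ y in ball x₀ ρ, V y * Real.exp (u y) :=
  setIntegral_mono_set
    ((integrableOn_ball_lapl hρ hρR hu).neg.congr_fun hpde measurableSet_ball)
    ((ae_restrict_mem measurableSet_ball).mono fun y hy => mul_nonneg (hV y hy) (Real.exp_pos _).le)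
    (ball_subset_ball hρ').eventuallyLE

theorem laplMass_comp_add_smul_sub_const (u : E2 → ℝ) (x₀ : E2) {r : ℝ} (hr : 0 < r) (c k : ℝ) :
    laplMass (fun z => u (x₀ + r • z) - c) k = ∫ y in ball x₀ (k * r), -lapl u y := by
  rw [← setIntegral_ball_comp_add_smul _ x₀ hr, finrank_euclideanSpace_fin, ← integral_const_mul]
  simp only [laplMass, lapl_comp_add_smul_sub_const, mul_neg]

section BlowUp

variable {b C k η r : ℝ} {u V : E2 → ℝ} {x₀ : E2}

theorem isApproxLiouville_comp_add_smul (hu : ContDiff ℝ 2 u)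
    (hV0 : ∀ y ∈ ball x₀ (k * r), 0 ≤ V y) (hVb : ∀ y ∈ ball x₀ (k * r), V y ≤ b)
    (hVη : ∀ y ∈ ball x₀ (k * r), |V y - V x₀| ≤ η)
    (hpde : ∀ y ∈ ball x₀ (k * r), -lapl u y = V y * Real.exp (u y))
    (hint : ∫ y in ball x₀ (k * r), Real.exp (u y) ≤ C)
    (hmax : ∀ y ∈ ball x₀ (k * r), u y ≤ u x₀) (hr : r = Real.exp (-u x₀ / 2)) :
    IsApproxLiouville b C k η fun x => u (x₀ + r • x) - u x₀ := by
  have hr0 : 0 < r := hr ▸ Real.exp_pos _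
  have hexp (x : E2) : Real.exp (u (x₀ + r • x) - u x₀) = r ^ 2 * Real.exp (u (x₀ + r • x)) := by
    rw [hr, ← Real.exp_nat_mul, ← Real.exp_add]
    congr 1
    push_cast
    ring
  have hmem : ∀ x ∈ ball (0 : E2) k, x₀ + r • x ∈ ball x₀ (k * r) := fun x hx => by
    rw [mem_ball_zero_iff] at hx
    rw [mem_ball_iff_norm, add_sub_cancel_left, norm_smul, Real.norm_of_nonneg hr0.le, mul_comm]
    gcongr
  have hlapl : ∀ x ∈ ball (0 : E2) k, -lapl (fun x => u (x₀ + r • x) - u x₀) x =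
      V (x₀ + r • x) * Real.exp (u (x₀ + r • x) - u x₀) := fun x hx => by
    rw [lapl_comp_add_smul_sub_const, hexp, ← mul_neg, hpde _ (hmem x hx), mul_left_comm]
  constructor
  · fun_prop
  · simp
  · exact fun x hx => sub_nonpos.2 (hmax _ (hmem x hx))
  · exact fun x hx => hlapl x hx ▸ mul_nonneg (hV0 _ (hmem x hx)) (Real.exp_pos _).le
  · exact fun x hx =>
      hlapl x hx ▸ mul_le_mul_of_nonneg_right (hVb _ (hmem x hx)) (Real.exp_pos _).le
  · refine ⟨V x₀, fun x hx => ?_⟩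
    rw [hlapl x hx, ← sub_mul, abs_mul, Real.abs_exp]
    exact mul_le_mul_of_nonneg_right (hVη _ (hmem x hx)) (Real.exp_pos _).le
  · simp only [hexp, integral_const_mul]
    have hvar := setIntegral_ball_comp_add_smul (μ := volume) (fun y => Real.exp (u y)) x₀ hr0 k
    rw [finrank_euclideanSpace_fin] at hvar
    exact hvar.trans_le hint

end BlowUp

theorem exists_eight_pi_mul_one_sub_le_setIntegral {b C ε : ℝ} (hb : 0 ≤ b) (hC : 0 ≤ C)
    (hε : 0 < ε) :
    ∃ k > 0, ∃ η > 0, ∀ (u V : E2 → ℝ) (x₀ : E2) (r R : ℝ), r = Real.exp (-u x₀ / 2) →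
      k * r < R → ContDiffOn ℝ 2 u (ball x₀ R) →
      (∀ y ∈ ball x₀ (k * r), 0 ≤ V y ∧ V y ≤ b) →
      (∀ y ∈ ball x₀ (k * r), |V y - V x₀| ≤ η) →
      (∀ y ∈ ball x₀ (k * r), -lapl u y = V y * Real.exp (u y)) →
      ∫ y in ball x₀ (k * r), Real.exp (u y) ≤ C →
      (∀ y ∈ ball x₀ (k * r), u y ≤ u x₀) →
      8 * Real.pi * (1 - ε) ≤ ∫ y in ball x₀ (k * r), V y * Real.exp (u y) := by
  obtain ⟨k, hk, η, hη, hmass⟩ := exists_eight_pi_mul_one_sub_le_laplMass hb hC hε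
  refine ⟨k, hk, η, hη, fun u V x₀ r R hr hkR hu hV hVη hpde hint hmax => ?_⟩
  have hr0 : 0 < r := hr ▸ Real.exp_pos _
  obtain ⟨g, hg, hgu⟩ := exists_contDiff_eqOn_ball (n := 2) (mul_pos hk hr0) hkR hu
  have hgl := eqOn_lapl isOpen_ball hgu
  have hx₀ : g x₀ = u x₀ := hgu (mem_ball_self (mul_pos hk hr0))
  have happrox : IsApproxLiouville b C k η fun x => g (x₀ + r • x) - g x₀ :=
    isApproxLiouville_comp_add_smul hg (fun y hy => (hV y hy).1) (fun y hy => (hV y hy).2) hVη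
      (fun y hy => by rw [hgl hy, hgu hy, hpde y hy])
      ((setIntegral_congr_fun measurableSet_ball fun y hy => by
        rw [hgu hy]).trans_le hint)
      (fun y hy => by rw [hgu hy, hx₀]; exact hmax y hy) (by rw [hx₀, hr])
  refine (hmass _ happrox).trans_eq ?_
  rw [laplMass_comp_add_smul_sub_const _ _ hr0]
  exact setIntegral_congr_fun measurableSet_ball fun y hy => by
    rw [hgl hy, hpde y hy]

theorem eventually_abs_sub_le_of_holder {ι E : Type*} [SeminormedAddCommGroup E] {l : Filter ι}
    {A s k η : ℝ} (hs : 0 < s) (hη : 0 < η) {f : ι → E → ℝ} {x : ι → E} {r δ : ι → ℝ}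
    (hr : Tendsto r l (𝓝 0)) (hkr : ∀ᶠ i in l, k * r i ≤ δ i)
    (hf : ∀ i, ∀ y ∈ ball (x i) (δ i), |f i y - f i (x i)| ≤ A * ‖y - x i‖ ^ s) :
    ∀ᶠ i in l, ∀ y ∈ ball (x i) (k * r i), |f i y - f i (x i)| ≤ η := by
  have hlim : Tendsto (fun i => |A| * (k * r i) ^ s) l (𝓝 0) := by
    simpa [Real.zero_rpow hs.ne'] using
      ((hr.const_mul k).rpow_const (Or.inr hs.le)).const_mul |A|
  filter_upwards [hlim.eventually_le_const hη, hkr] with i hi hkri y hy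
  refine (hf i y (ball_subset_ball hkri hy)).trans (le_trans ?_ hi)
  gcongr
  exacts [le_abs_self A, (mem_ball_iff_norm.1 hy).le]

theorem ball_infDist_frontier_subset {E : Type*} [SeminormedAddCommGroup E] [NormedSpace ℝ E]
    {s : Set E} (hs : IsOpen s) {x : E} (hx : x ∈ s) : ball x (infDist x (frontier s)) ⊆ s := by
  rcases le_or_gt (infDist x (frontier s)) 0 with h | h
  · simp [ball_eq_empty.2 h]
  · refine (convex_ball x _).isPreconnected.subset_of_closure_inter_subset hs
      ⟨x, mem_ball_self h, hx⟩ fun y hy => ?_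
    by_contra hys
    exact ball_infDist_subset_compl hy.2 (hs.frontier_eq ▸ ⟨hy.1, hys⟩)

theorem infDist_sphere_pos {E : Type*} [NormedAddCommGroup E] [NormedSpace ℝ E] [Nontrivial E]
    {c x : E} {R : ℝ} (hx : x ∈ ball c R) : 0 < infDist x (sphere c R) :=
  (isClosed_sphere.notMem_iff_infDist_pos
    (NormedSpace.sphere_nonempty.2 (pos_of_mem_ball hx).le)).1 fun h => (mem_ball.1 hx).ne h

theorem ball_infDist_sphere_subset {E : Type*} [NormedAddCommGroup E] [NormedSpace ℝ E]
    {c x : E} {R : ℝ} (hx : x ∈ ball c R) : ball x (infDist x (sphere c R)) ⊆ ball c R := by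
  rw [← frontier_ball c (pos_of_mem_ball hx).ne']
  exact ball_infDist_frontier_subset isOpen_ball hx

theorem stmt17_general {b A s C : ℝ} (hs : 0 < s) {V u : ℕ → E2 → ℝ} {x_ : ℕ → E2} {δ : ℕ → ℝ}
    (hδ : ∀ i, 0 < δ i)
    (hu : ∀ i, ContDiffOn ℝ 2 (u i) (ball (x_ i) (δ i)))
    (hVb : ∀ i, ∀ y ∈ ball (x_ i) (δ i), 0 ≤ V i y ∧ V i y ≤ b)
    (hVhol : ∀ i, ∀ y ∈ ball (x_ i) (δ i), |V i y - V i (x_ i)| ≤ A * ‖y - x_ i‖ ^ s)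
    (hpde : ∀ i, ∀ y ∈ ball (x_ i) (δ i), -lapl (u i) y = V i y * Real.exp (u i y))
    (hint : ∀ i, ∫ y in ball (x_ i) (δ i / 2), Real.exp (u i y) ≤ C)
    (hmax : ∀ i, ∀ y ∈ ball (x_ i) (δ i), u i y ≤ u i (x_ i))
    (hblow : Tendsto (fun i => u i (x_ i)) atTop atTop)
    (hrδ : Tendsto (fun i => Real.exp (-u i (x_ i) / 2) / δ i) atTop (𝓝 0))
    (hmass : Tendsto (fun i => ∫ y in ball (x_ i) (δ i / 2), V i y * Real.exp (u i y)) atTop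
      (𝓝 (8 * Real.pi))) :
    ∀ ε : ℝ, 0 < ε → ∃ k > (0 : ℝ), ∃ i₀ : ℕ, ∀ i ≥ i₀,
      8 * Real.pi * (1 - ε) ≤
          (∫ y in ball (x_ i) (k * Real.exp (-u i (x_ i) / 2)), V i y * Real.exp (u i y)) ∧
        (∫ y in ball (x_ i) (k * Real.exp (-u i (x_ i) / 2)), V i y * Real.exp (u i y)) ≤
          8 * Real.pi * (1 + ε) := by
  intro ε hε
  have hx (i) : x_ i ∈ ball (x_ i) (δ i) := mem_ball_self (hδ i)
  have hb : 0 ≤ b := (hVb 0 _ (hx 0)).1.trans (hVb 0 _ (hx 0)).2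
  have hC : 0 ≤ C := (setIntegral_nonneg measurableSet_ball fun _ _ => (Real.exp_pos _).le).trans
    (hint 0)
  obtain ⟨k, hk, η, hη, hlower⟩ := exists_eight_pi_mul_one_sub_le_setIntegral hb hC hε
  have hr0 : Tendsto (fun i => Real.exp (-u i (x_ i) / 2)) atTop (𝓝 0) :=
    Real.tendsto_exp_atBot.comp ((tendsto_neg_atTop_atBot.comp hblow).atBot_div_const two_pos)
  have hkr : ∀ᶠ i in atTop, k * Real.exp (-u i (x_ i) / 2) ≤ δ i / 2 := by
    filter_upwards [hrδ.eventually_le_const (show 0 < 1 / (2 * k) by positivity)] with i hi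
    rw [div_le_div_iff₀ (hδ i) (by positivity)] at hi
    linarith
  have hVη := eventually_abs_sub_le_of_holder hs hη hr0
    (hkr.mono fun i hi => hi.trans (half_le_self (hδ i).le)) hVhol
  have hupper := hmass.eventually_le_const
    (lt_mul_of_one_lt_right (by positivity) (lt_add_of_pos_right 1 hε) :
      8 * Real.pi < 8 * Real.pi * (1 + ε))
  refine ⟨k, hk, eventually_atTop.1 ?_⟩
  filter_upwards [hkr, hVη, hupper] with i hkri hVηi hupperi
  have hlt : δ i / 2 < δ i := half_lt_self (hδ i)
  have hhalf : ball (x_ i) (δ i / 2) ⊆ ball (x_ i) (δ i) := ball_subset_ball hlt.le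
  have hsub : ball (x_ i) (k * Real.exp (-u i (x_ i) / 2)) ⊆ ball (x_ i) (δ i / 2) :=
    ball_subset_ball hkri
  exact ⟨hlower (u i) (V i) (x_ i) _ _ rfl (hkri.trans_lt hlt) (hu i)
      (fun y hy => hVb i y (hhalf (hsub hy))) hVηi (fun y hy => hpde i y (hhalf (hsub hy)))
      ((setIntegral_exp_mono (isCompact_closedBall _ _)
        ((hu i).continuousOn.mono (closedBall_subset_ball hlt)) hsub ball_subset_closedBall).trans
        (hint i))
      (fun y hy => hmax i y (hhalf (hsub hy))),
    (setIntegral_ball_mul_exp_mono (half_pos (hδ i)) hkri hlt (hu i)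
      (fun y hy => (hVb i y (hhalf hy)).1) fun y hy => hpde i y (hhalf hy)).trans hupperi⟩

theorem stmt17
    (b A s C₀ : ℝ) (hs1 : 1/2 < s) (hs2 : s ≤ 1)
    (V u : ℕ → E2 → ℝ) (x_ : ℕ → E2) (δ r : ℕ → ℝ) (v : ℕ → E2 → ℝ)
    (hu : ∀ i, ContDiffOn ℝ 2 (u i) (closedBall (0:E2) 1))
    (hVb : ∀ i, ∀ x ∈ ball (0:E2) 1, 0 ≤ V i x ∧ V i x ≤ b)
    (hVhol : ∀ i, ∀ x ∈ ball (0:E2) 1, ∀ y ∈ ball (0:E2) 1, |V i x - V i y| ≤ A * ‖x - y‖ ^ s)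
    (hpde : ∀ i, ∀ x ∈ ball (0:E2) 1, -(lapl (u i) x) = V i x * Real.exp (u i x))
    (hbc : ∀ i, ∀ x ∈ sphere (0:E2) 1, u i x = 0)
    (hint : ∀ i, (∫ y in ball (0:E2) 1, Real.exp (u i y)) ≤ C₀)
    (hxmem : ∀ i, x_ i ∈ ball (0:E2) 1)
    (hmax : ∀ i, ∀ y ∈ closedBall (0:E2) 1, u i y ≤ u i (x_ i))
    (hblow : Tendsto (fun i => u i (x_ i)) atTop atTop)
    (hδ : ∀ i, δ i = Metric.infDist (x_ i) (sphere (0:E2) 1))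
    (hδ0 : Tendsto δ atTop (nhds 0))
    (hr : ∀ i, r i = Real.exp (-(u i (x_ i)) / 2))
    (hrδ : Tendsto (fun i => r i / δ i) atTop (nhds 0))
    (hmass : Tendsto (fun i => ∫ y in ball (x_ i) (δ i / 2), V i y * Real.exp (u i y)) atTop
      (nhds (8 * Real.pi)))
    (hbound : ∀ ε : ℝ, 0 < ε → ε < 1 → ∃ Cε : ℝ, ∀ i, ∀ y : E2, ‖y‖ = ε →
      u i (x_ i + δ i • y) ≤ Cε)
    (hv : ∀ i θ, v i θ = u i (x_ i + r i • θ) - u i (x_ i)) :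
    ∀ ε : ℝ, 0 < ε → ∃ k > (0:ℝ), ∃ i₀ : ℕ, ∀ i ≥ i₀,
      8 * Real.pi * (1 - ε) ≤
          (∫ y in ball (x_ i) (k * Real.exp (-(u i (x_ i)) / 2)), V i y * Real.exp (u i y)) ∧
        (∫ y in ball (x_ i) (k * Real.exp (-(u i (x_ i)) / 2)), V i y * Real.exp (u i y)) ≤
          8 * Real.pi * (1 + ε) := by
  have hδpos (i) : 0 < δ i := (infDist_sphere_pos (hxmem i)).trans_eq (hδ i).symm
  have hsub (i) : ball (x_ i) (δ i) ⊆ ball (0 : E2) 1 :=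
    (hδ i).symm ▸ ball_infDist_sphere_subset (hxmem i)
  refine stmt17_general (by linarith) hδpos
    (fun i => (hu i).mono ((hsub i).trans ball_subset_closedBall))
    (fun i y hy => hVb i y (hsub i hy))
    (fun i y hy => hVhol i y (hsub i hy) _ (hxmem i)) (fun i y hy => hpde i y (hsub i hy))
    (fun i => (setIntegral_exp_mono (isCompact_closedBall 0 1) (hu i).continuousOn ?_
      ball_subset_closedBall).trans (hint i))
    (fun i y hy => hmax i y (ball_subset_closedBall (hsub i hy))) hblow
    (by simpa only [hr] using hrδ) hmass
  exact (ball_subset_ball (half_le_self (hδpos i).le)).trans (hsub i)
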